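/- arXiv:2404.05355 — 5 statements merged into one kernel-verified Lean document; each statement's English description precedes it below -/
import Mathlib

section
/- Let A ∈ ℝ^{n×n} be a matrix all of whose eigenvalues over ℂ have negative real part, and let g : ℝ → ℝⁿ be continuous and bounded. Then for every t ∈ ℝ the improper integral x(t) = ∫_{−∞}^{t} e^{A(t−τ)} g(τ) dτ converges; the function x so defined is a bounded solution of ẋ = A x + g(t) on all of ℝ; and every solution of ẋ = A x + g(t) that is bounded on ℝ coincides with x. -/
open MeasureTheory

/-- The action of the matrix exponential `e^{tA}` on a vector of `EuclideanSpace ℝ (Fin n)`. -/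
noncomputable def expAct {n : ℕ} (A : Matrix (Fin n) (Fin n) ℝ) (t : ℝ)
    (v : EuclideanSpace ℝ (Fin n)) : EuclideanSpace ℝ (Fin n) :=
  Matrix.toEuclideanLin (NormedSpace.exp (t • A)) v

section decay
variable {V : Type*} [NormedAddCommGroup V] [NormedSpace ℂ V] [CompleteSpace V]

lemma aux_nilp (N : V →L[ℂ] V) (k : ℕ) : ∀ v : V, (N ^ k) v = 0 → ∀ ε : ℝ, 0 < ε →
    ∃ M : ℝ, 0 ≤ M ∧ ∀ t : ℝ, 0 ≤ t → ‖NormedSpace.exp ((t : ℂ) • N) v‖ ≤ M * Real.exp (ε * t) := by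
  induction k with
  | zero =>
    intro v hv ε hε
    have : v = 0 := by simpa using hv
    subst this
    exact ⟨0, le_rfl, fun t _ => by simp⟩
  | succ k ih =>
    intro v hv ε hε
    obtain ⟨M, hM0, hM⟩ := ih (N v) (by rw [pow_succ] at hv; exact hv) ε hε
    refine ⟨‖v‖ + M / ε, by positivity, fun t ht => ?_⟩
    have hder : ∀ s : ℝ, HasDerivAt (fun u : ℝ => NormedSpace.exp ((u : ℂ) • N) v)
        (NormedSpace.exp ((s : ℂ) • N) (N v)) s := by
      intro s
      have h1 := (hasDerivAt_exp_smul_const (𝕂 := ℂ) N (s : ℂ))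
      have h2 := (h1.clm_apply (hasDerivAt_const (s : ℂ) v)).scomp s
        Complex.ofRealCLM.hasDerivAt
      simpa [Function.comp_def] using h2
    have hB : ∀ s : ℝ, HasDerivAt (fun u : ℝ => ‖v‖ + M / ε * Real.exp (ε * u))
        (M * Real.exp (ε * s)) s := by
      intro s
      have h1 := ((((hasDerivAt_id s).const_mul ε).exp).const_mul (M / ε)).const_add ‖v‖
      convert! h1 using 1
      simp; field_simp
    have := image_norm_le_of_norm_deriv_right_le_deriv_boundary (a := 0) (b := t)
      (fun s _ => (hder s).continuousAt.continuousWithinAt)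
      (fun s _ => (hder s).hasDerivWithinAt)
      (B := fun u : ℝ => ‖v‖ + M / ε * Real.exp (ε * u))
      (by simp; positivity) hB (fun s hs => hM s hs.1) (x := t) ⟨ht, le_rfl⟩
    refine this.trans ?_
    have h1 : 1 ≤ Real.exp (ε * t) := Real.one_le_exp (by positivity)
    nlinarith [norm_nonneg v]

lemma aux_gen (T : V →L[ℂ] V) (μ : ℂ) (hμ : μ.re < 0) (k : ℕ) (v : V)
    (hv : ((T - μ • (1 : V →L[ℂ] V)) ^ k) v = 0) :
    ∃ M δ : ℝ, 0 ≤ M ∧ 0 < δ ∧ ∀ t : ℝ, 0 ≤ t →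
      ‖NormedSpace.exp ((t : ℂ) • T) v‖ ≤ M * Real.exp (-δ * t) := by
  obtain ⟨M, hM0, hM⟩ := aux_nilp _ k v hv (-μ.re / 2) (by linarith)
  refine ⟨M, -μ.re / 2, hM0, by linarith, fun t ht => ?_⟩
  have h1 : (t : ℂ) • T = algebraMap ℂ (V →L[ℂ] V) (t * μ) + (t : ℂ) • (T - μ • 1) := by
    rw [Algebra.algebraMap_eq_smul_one, smul_sub, smul_smul]; abel
  let _ : NormedAlgebra ℚ (V →L[ℂ] V) := NormedAlgebra.restrictScalars ℚ ℂ _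
  rw [h1, NormedSpace.exp_add_of_commute (Algebra.commutes _ _), ← NormedSpace.algebraMap_exp_comm,
    Algebra.algebraMap_eq_smul_one, smul_one_mul, smul_apply, norm_smul,
    ← Complex.exp_eq_exp_ℂ, Complex.norm_exp]
  calc _ ≤ Real.exp ((t * μ : ℂ).re) * (M * Real.exp (-μ.re / 2 * t)) := by
        gcongr; exact hM t ht
    _ = M * (Real.exp ((t * μ : ℂ).re) * Real.exp (-μ.re / 2 * t)) := by ring
    _ = _ := by rw [← Real.exp_add]; congr 2; simp; ring

lemma aux_vec [FiniteDimensional ℂ V] (T : V →L[ℂ] V)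
    (hT : ∀ μ : ℂ, Module.End.HasEigenvalue (T : V →ₗ[ℂ] V) μ → μ.re < 0) (v : V) :
    ∃ M δ : ℝ, 0 ≤ M ∧ 0 < δ ∧ ∀ t : ℝ, 0 ≤ t →
      ‖NormedSpace.exp ((t : ℂ) • T) v‖ ≤ M * Real.exp (-δ * t) := by
  have hmem : v ∈ ⨆ μ : ℂ, Module.End.maxGenEigenspace (T : V →ₗ[ℂ] V) μ := by
    rw [Module.End.iSup_maxGenEigenspace_eq_top]; trivial
  induction hmem using Submodule.iSup_induction' with
  | zero => exact ⟨0, 1, le_rfl, one_pos, fun t _ => by simp⟩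
  | mem μ x hx =>
    by_cases hx0 : x = 0
    · subst hx0
      exact ⟨0, 1, le_rfl, one_pos, fun t _ => by simp⟩
    obtain ⟨k, hk⟩ := (Module.End.mem_maxGenEigenspace _ _ _).1 hx
    refine aux_gen T μ (hT μ ?_) k x ?_
    · have : Module.End.HasUnifEigenvalue (T : V →ₗ[ℂ] V) μ k := by
        intro h
        have h2 : x ∈ Module.End.genEigenspace (T : V →ₗ[ℂ] V) μ k :=
          Module.End.mem_genEigenspace_nat.2 hk
        rw [h] at h2
        exact hx0 (by simpa using h2)
      exact Module.End.hasEigenvalue_of_hasGenEigenvalue this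
    · have : (((T - μ • (1 : V →L[ℂ] V)) ^ k : V →L[ℂ] V) : V →ₗ[ℂ] V)
          = ((T : V →ₗ[ℂ] V) - μ • (1 : Module.End ℂ V)) ^ k := by
        rw [ContinuousLinearMap.toLinearMap_pow]; rfl
      rw [← this] at hk
      exact hk
  | add x y _ _ hx hy =>
    obtain ⟨M, δ, hM, hδ, h⟩ := hx
    obtain ⟨Mb, δb, hMb, hδb, hb⟩ := hy
    refine ⟨M + Mb, min δ δb, by positivity, lt_min hδ hδb, fun t ht => ?_⟩
    rw [map_add, add_mul]
    refine (norm_add_le _ _).trans (add_le_add ((h t ht).trans ?_) ((hb t ht).trans ?_))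
    · gcongr; exact min_le_left _ _
    · gcongr; exact min_le_right _ _

end decay

section
open scoped Matrix.Norms.Operator

lemma aux_mapexp {n : ℕ} (𝕜 : Type*) [RCLike 𝕜] (B : Matrix (Fin n) (Fin n) 𝕜) :
    Matrix.toEuclideanCLM (n := Fin n) (𝕜 := 𝕜) (NormedSpace.exp B) =
      NormedSpace.exp (Matrix.toEuclideanCLM (n := Fin n) (𝕜 := 𝕜) B) := by
  let _ : NormedAlgebra ℚ (Matrix (Fin n) (Fin n) 𝕜) := NormedAlgebra.restrictScalars ℚ 𝕜 _
  let _ : NormedAlgebra ℚ (EuclideanSpace 𝕜 (Fin n) →L[𝕜] EuclideanSpace 𝕜 (Fin n)) :=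
    NormedAlgebra.restrictScalars ℚ 𝕜 _
  have h := NormedSpace.map_exp (Matrix.toEuclideanCLM (n := Fin n) (𝕜 := 𝕜))
    (LinearMap.continuous_of_finiteDimensional
      ((Matrix.toEuclideanCLM (n := Fin n) (𝕜 := 𝕜)).toAlgEquiv.toLinearMap)) B
  exact h

lemma aux_mapexp2 {n : ℕ} (A : Matrix (Fin n) (Fin n) ℝ) :
    (NormedSpace.exp A).map Complex.ofReal = NormedSpace.exp (Complex.ofRealHom.mapMatrix A) := by
  let _ : NormedAlgebra ℚ (Matrix (Fin n) (Fin n) ℝ) := NormedAlgebra.restrictScalars ℚ ℝ _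
  let _ : NormedAlgebra ℚ (Matrix (Fin n) (Fin n) ℂ) := NormedAlgebra.restrictScalars ℚ ℂ _
  have h := NormedSpace.map_exp
    (Complex.ofRealHom.mapMatrix : Matrix (Fin n) (Fin n) ℝ →+* Matrix (Fin n) (Fin n) ℂ)
    (Continuous.matrix_map continuous_id Complex.continuous_ofReal) A
  exact h

end

lemma aux_mat {n : ℕ} (A : Matrix (Fin n) (Fin n) ℝ)
    (hspec : ∀ μ ∈ spectrum ℂ (A.map Complex.ofReal), μ.re < 0) (v : EuclideanSpace ℝ (Fin n)) :
    ∃ M δ : ℝ, 0 ≤ M ∧ 0 < δ ∧ ∀ t : ℝ, 0 ≤ t →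
      ‖expAct A t v‖ ≤ M * Real.exp (-δ * t) := by
  let B := A.map Complex.ofReal
  obtain ⟨M, δ, hM, hδ, h⟩ := aux_vec (Matrix.toEuclideanCLM (n := Fin n) (𝕜 := ℂ) B) (by
    intro μ hμ
    apply hspec
    have h1 := hμ.mem_spectrum
    rw [← ContinuousLinearMap.spectrum_eq, AlgEquiv.spectrum_eq] at h1
    exact h1) (WithLp.toLp 2 (fun i => (v i : ℂ)))
  refine ⟨M, δ, hM, hδ, fun t ht => (le_of_eq ?_).trans (h t ht)⟩
  have e1 : NormedSpace.exp ((t : ℂ) • Matrix.toEuclideanCLM (n := Fin n) (𝕜 := ℂ) B)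
      = Matrix.toEuclideanCLM (n := Fin n) (𝕜 := ℂ) (NormedSpace.exp ((t : ℂ) • B)) := by
    rw [← map_smul]
    exact (aux_mapexp _ _).symm
  have e2 : NormedSpace.exp ((t : ℂ) • B) = (NormedSpace.exp (t • A)).map Complex.ofReal := by
    have e3 : (t : ℂ) • B = (Complex.ofRealHom.mapMatrix (t • A)) := by
      ext i j; simp [B]
    rw [e3]
    exact (aux_mapexp2 _).symm
  rw [e1, e2, Matrix.toEuclideanCLM_toLp]
  have e4 : ((NormedSpace.exp (t • A)).map Complex.ofReal).mulVec (fun i => (v i : ℂ))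
      = fun i => ((expAct A t v i : ℝ) : ℂ) := by
    ext i
    exact (RingHom.map_mulVec Complex.ofRealHom (NormedSpace.exp (t • A)) (fun i => v i) i).symm
  rw [e4, EuclideanSpace.norm_eq, EuclideanSpace.norm_eq]
  simp

lemma aux_unif {n : ℕ} (A : Matrix (Fin n) (Fin n) ℝ)
    (hspec : ∀ μ ∈ spectrum ℂ (A.map Complex.ofReal), μ.re < 0) :
    ∃ M δ : ℝ, 0 ≤ M ∧ 0 < δ ∧ ∀ t : ℝ, 0 ≤ t → ∀ v : EuclideanSpace ℝ (Fin n),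
      ‖expAct A t v‖ ≤ M * Real.exp (-δ * t) * ‖v‖ := by
  choose M d hM hd h using fun i : Fin n =>
    aux_mat A hspec (EuclideanSpace.basisFun (Fin n) ℝ i)
  obtain ⟨δ, hδ, hδ0⟩ : ∃ δ : ℝ, (∀ i, δ ∈ Set.Ioo 0 (d i)) ∧ δ ∈ Set.Ioi (0 : ℝ) :=
    ((Filter.eventually_all.2 fun i => Ioo_mem_nhdsGT (hd i)).and
      (self_mem_nhdsWithin : Set.Ioi (0 : ℝ) ∈ nhdsWithin 0 (Set.Ioi 0))).exists
  refine ⟨∑ i, M i, δ, Finset.sum_nonneg fun i _ => hM i, hδ0, fun t ht v => ?_⟩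
  have hv := (EuclideanSpace.basisFun (Fin n) ℝ).sum_repr v
  calc ‖expAct A t v‖ = ‖∑ i, v i • expAct A t (EuclideanSpace.basisFun (Fin n) ℝ i)‖ := by
        conv_lhs => rw [← hv]
        simp only [expAct, map_sum, map_smul, EuclideanSpace.basisFun_repr]
    _ ≤ ∑ i, ‖v‖ * (M i * Real.exp (-δ * t)) := by
        refine (norm_sum_le _ _).trans (Finset.sum_le_sum fun i _ => ?_)
        rw [norm_smul]
        refine mul_le_mul (PiLp.norm_apply_le v i) ((h i t ht).trans ?_) (norm_nonneg _)
          (norm_nonneg _)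
        have := (hδ i).2
        have := hM i
        gcongr
    _ = _ := by rw [← Finset.mul_sum, ← Finset.sum_mul]; ring

section ode
variable {F : Type*} [NormedAddCommGroup F] [NormedSpace ℝ F] [CompleteSpace F]

lemma aux_add (T : F →L[ℝ] F) (s t : ℝ) (v : F) :
    NormedSpace.exp ((s + t) • T) v = NormedSpace.exp (s • T) (NormedSpace.exp (t • T) v) := by
  let _ : NormedAlgebra ℚ (F →L[ℝ] F) := NormedAlgebra.restrictScalars ℚ ℝ _
  rw [add_smul, NormedSpace.exp_add_of_commute
    (((Commute.refl T).smul_left s).smul_right t)]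
  rfl

lemma aux_cont (T : F →L[ℝ] F) : Continuous (fun t : ℝ => NormedSpace.exp (t • T)) :=
  continuous_iff_continuousAt.2 fun t =>
    (hasDerivAt_exp_smul_const (𝕂 := ℝ) T t).continuousAt

lemma aux_ode (T : F →L[ℝ] F) (M δ : ℝ) (hM : 0 ≤ M) (hδ : 0 < δ)
    (hT : ∀ t : ℝ, 0 ≤ t → ∀ v : F, ‖NormedSpace.exp (t • T) v‖ ≤ M * Real.exp (-δ * t) * ‖v‖)
    (g : ℝ → F) (hgc : Continuous g) (hgb : ∃ C : ℝ, ∀ t : ℝ, ‖g t‖ ≤ C) :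
    (∀ t : ℝ, IntegrableOn (fun τ => NormedSpace.exp ((t - τ) • T) (g τ)) (Set.Iic t)) ∧
    (∃ C : ℝ, ∀ t : ℝ, ‖∫ τ in Set.Iic t, NormedSpace.exp ((t - τ) • T) (g τ)‖ ≤ C) ∧
    (∀ t : ℝ, HasDerivAt (fun s => ∫ τ in Set.Iic s, NormedSpace.exp ((s - τ) • T) (g τ))
      (T (∫ τ in Set.Iic t, NormedSpace.exp ((t - τ) • T) (g τ)) + g t) t) ∧
    (∀ y : ℝ → F,
      (∀ t : ℝ, HasDerivAt y (T (y t) + g t) t) →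
      (∃ C : ℝ, ∀ t : ℝ, ‖y t‖ ≤ C) →
      ∀ t : ℝ, y t = ∫ τ in Set.Iic t, NormedSpace.exp ((t - τ) • T) (g τ)) := by
  obtain ⟨C, hC⟩ := hgb
  have hC0 : 0 ≤ C := (norm_nonneg _).trans (hC 0)
  have hcont : ∀ t : ℝ, Continuous (fun τ => NormedSpace.exp ((t - τ) • T) (g τ)) := fun t =>
    ((aux_cont T).comp (continuous_const.sub continuous_id)).clm_apply hgc
  have hdom : ∀ t : ℝ, IntegrableOn
      (fun τ => M * C * Real.exp (-δ * t) * Real.exp (δ * τ)) (Set.Iic t) := fun t =>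
    (integrableOn_exp_mul_Iic hδ t).const_mul _
  have hle : ∀ t : ℝ, ∀ᵐ τ ∂(volume.restrict (Set.Iic t)),
      ‖NormedSpace.exp ((t - τ) • T) (g τ)‖ ≤
        M * C * Real.exp (-δ * t) * Real.exp (δ * τ) := by
    intro t
    filter_upwards [ae_restrict_mem measurableSet_Iic] with τ hτ
    have h0 : 0 ≤ t - τ := sub_nonneg.2 hτ
    calc _ ≤ M * Real.exp (-δ * (t - τ)) * ‖g τ‖ := hT _ h0 _
      _ ≤ M * Real.exp (-δ * (t - τ)) * C := by gcongr; exact hC τ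
      _ = _ := by
        have : -δ * (t - τ) = -δ * t + δ * τ := by ring
        rw [this, Real.exp_add]; ring
  have hint : ∀ t : ℝ, IntegrableOn (fun τ => NormedSpace.exp ((t - τ) • T) (g τ)) (Set.Iic t) :=
    fun t => Integrable.mono' (hdom t) (hcont t).aestronglyMeasurable (hle t)
  have hbdd : ∀ t : ℝ, ‖∫ τ in Set.Iic t, NormedSpace.exp ((t - τ) • T) (g τ)‖ ≤ M * C / δ := by
    intro t
    refine (norm_integral_le_of_norm_le (hdom t) (hle t)).trans (le_of_eq ?_)
    rw [integral_const_mul, integral_exp_mul_Iic hδ]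
    have : Real.exp (-δ * t) * Real.exp (δ * t) = 1 := by
      rw [← Real.exp_add]; simp
    calc _ = M * C / δ * (Real.exp (-δ * t) * Real.exp (δ * t)) := by ring
      _ = _ := by rw [this, mul_one]
  -- the factored integrand
  have hcont0 := hcont 0
  have hint0 : ∀ t : ℝ, IntegrableOn (fun τ => NormedSpace.exp ((0 - τ) • T) (g τ)) (Set.Iic t) := by
    intro t
    have h1 := (NormedSpace.exp ((-t) • T)).integrable_comp (hint t)
    refine h1.congr (Filter.Eventually.of_forall fun τ => ?_)
    simp only
    rw [← aux_add]; congr 3; ring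
  have hfac : ∀ t : ℝ, ∫ τ in Set.Iic t, NormedSpace.exp ((t - τ) • T) (g τ) =
      NormedSpace.exp (t • T) (∫ τ in Set.Iic t, NormedSpace.exp ((0 - τ) • T) (g τ)) := by
    intro t
    rw [← ContinuousLinearMap.integral_comp_comm _ (hint0 t)]
    congr 1
    ext τ
    rw [← aux_add]; congr 3; ring
  have hder : ∀ t : ℝ, HasDerivAt (fun s => ∫ τ in Set.Iic s, NormedSpace.exp ((s - τ) • T) (g τ))
      (T (∫ τ in Set.Iic t, NormedSpace.exp ((t - τ) • T) (g τ)) + g t) t := by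
    intro t
    have h1 : HasDerivAt (fun s => ∫ τ in Set.Iic s, NormedSpace.exp ((0 - τ) • T) (g τ))
        (NormedSpace.exp ((0 - t) • T) (g t)) t := by
      have h2 := (intervalIntegral.integral_hasDerivAt_right (hcont0.intervalIntegrable 0 t)
        (hcont0.stronglyMeasurableAtFilter _ _) hcont0.continuousAt).const_add
        (∫ τ in Set.Iic 0, NormedSpace.exp ((0 - τ) • T) (g τ))
      refine h2.congr_of_eventuallyEq (Filter.Eventually.of_forall fun s => ?_)
      simp only
      rw [← intervalIntegral.integral_Iic_sub_Iic (hint0 0) (hint0 s)]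
      abel
    have h3 := (hasDerivAt_exp_smul_const' (𝕂 := ℝ) T t).clm_apply h1
    simp_rw [hfac]
    convert! h3 using 1
    rw [← aux_add]
    simp
  refine ⟨hint, ⟨_, hbdd⟩, hder, ?_⟩
  rintro y hy ⟨K, hK⟩ t
  let z : ℝ → F := fun s => y s - ∫ τ in Set.Iic s, NormedSpace.exp ((s - τ) • T) (g τ)
  have hz : ∀ s, HasDerivAt z (T (z s)) s := by
    intro s
    convert! (hy s).sub (hder s) using 1
    simp [z]
  have hzb : ∀ s, ‖z s‖ ≤ K + M * C / δ := fun s =>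
    (norm_sub_le _ _).trans (add_le_add (hK s) (hbdd s))
  have hw : ∀ s, HasDerivAt (fun u => NormedSpace.exp ((t - u) • T) (z u)) 0 s := by
    intro s
    have h1 := (hasDerivAt_exp_smul_const (𝕂 := ℝ) T (t - s)).scomp s
      ((hasDerivAt_id s).const_sub t)
    have h2 := h1.clm_apply (hz s)
    convert! h2 using 1
    simp
  have hconst : ∀ s, z t = NormedSpace.exp ((t - s) • T) (z s) := by
    intro s
    have := is_const_of_deriv_eq_zero (fun u => (hw u).differentiableAt) (fun u => (hw u).deriv) t s
    simpa using this
  have hz0 : ‖z t‖ ≤ 0 := by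
    have hlim : Filter.Tendsto (fun r : ℝ => M * Real.exp (-(δ * r)) * (K + M * C / δ))
        Filter.atTop (nhds (M * 0 * (K + M * C / δ))) :=
      ((Real.tendsto_exp_neg_atTop_nhds_zero.comp
        (Filter.tendsto_id.const_mul_atTop hδ)).const_mul M).mul_const _
    rw [mul_zero, zero_mul] at hlim
    refine ge_of_tendsto hlim ?_
    filter_upwards [Filter.eventually_ge_atTop 0] with r hr
    have h1 := hT r hr (z (t - r))
    have h2 := hconst (t - r)
    rw [sub_sub_cancel] at h2
    rw [h2, ← neg_mul]
    exact h1.trans (by gcongr; exact hzb _)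
  exact sub_eq_zero.1 (norm_le_zero_iff.1 hz0)

end ode

/-- if all eigenvalues of `A` over `ℂ` have negative real part and `g` is
continuous and bounded, then `x t = ∫_{-∞}^t e^{A(t-τ)} g(τ) dτ` converges, is bounded,
solves `ẋ = A x + g(t)` on all of `ℝ`, and is the unique solution bounded on `ℝ`. -/
theorem stmt_1 {n : ℕ} (A : Matrix (Fin n) (Fin n) ℝ)
    (hspec : ∀ μ ∈ spectrum ℂ (A.map Complex.ofReal), μ.re < 0)
    (g : ℝ → EuclideanSpace ℝ (Fin n))
    (hgc : Continuous g) (hgb : ∃ C : ℝ, ∀ t : ℝ, ‖g t‖ ≤ C) :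
    (∀ t : ℝ, IntegrableOn (fun τ => expAct A (t - τ) (g τ)) (Set.Iic t)) ∧
    (∃ C : ℝ, ∀ t : ℝ, ‖∫ τ in Set.Iic t, expAct A (t - τ) (g τ)‖ ≤ C) ∧
    (∀ t : ℝ, HasDerivAt (fun s => ∫ τ in Set.Iic s, expAct A (s - τ) (g τ))
      (Matrix.toEuclideanLin A (∫ τ in Set.Iic t, expAct A (t - τ) (g τ)) + g t) t) ∧
    (∀ y : ℝ → EuclideanSpace ℝ (Fin n),
      (∀ t : ℝ, HasDerivAt y (Matrix.toEuclideanLin A (y t) + g t) t) →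
      (∃ C : ℝ, ∀ t : ℝ, ‖y t‖ ≤ C) →
      ∀ t : ℝ, y t = ∫ τ in Set.Iic t, expAct A (t - τ) (g τ)) := by
  obtain ⟨M, δ, hM, hδ, h⟩ := aux_unif A hspec
  have e : ∀ (t : ℝ) (v : EuclideanSpace ℝ (Fin n)), expAct A t v =
      NormedSpace.exp (t • Matrix.toEuclideanCLM (n := Fin n) (𝕜 := ℝ) A) v := by
    intro t v
    rw [← map_smul, ← aux_mapexp]
    rfl
  simp only [e] at h ⊢
  exact aux_ode (Matrix.toEuclideanCLM (n := Fin n) (𝕜 := ℝ) A) M δ hM hδ h g hgc hgb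
end

section
/- Let A ∈ ℝ^{n×n} and let T ∈ ℝ^{n×n} be invertible with T^{−1} A T = blockdiag(A_s, A_u), where every eigenvalue of A_s over ℂ has negative real part and every eigenvalue of A_u over ℂ has positive real part. Define G(t) = T · blockdiag(e^{A_s t}, 0) · T^{−1} for t ≥ 0 and G(t) = T · blockdiag(0, −e^{A_u t}) · T^{−1} for t < 0. Then for every continuous bounded g : ℝ → ℝⁿ, the improper integral y(t) = ∫_{−∞}^{∞} G(t−τ) g(τ) dτ converges for all t, the function y is a bounded solution of ẏ = A y + g(t) on ℝ, and it is the unique solution bounded on ℝ. -/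
open MeasureTheory

/-- The Green's function `G(t)`: `T ⬝ blockdiag(e^{A_s t}, 0) ⬝ T⁻¹` for `t ≥ 0` and
`T ⬝ blockdiag(0, −e^{A_u t}) ⬝ T⁻¹` for `t < 0`. -/
noncomputable def greenFun {m k : ℕ} (T : Matrix (Fin m ⊕ Fin k) (Fin m ⊕ Fin k) ℝ)
    (As : Matrix (Fin m) (Fin m) ℝ) (Au : Matrix (Fin k) (Fin k) ℝ) (t : ℝ) :
    Matrix (Fin m ⊕ Fin k) (Fin m ⊕ Fin k) ℝ :=
  if 0 ≤ t then T * Matrix.fromBlocks (NormedSpace.exp (t • As)) 0 0 0 * T⁻¹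
  else T * Matrix.fromBlocks 0 0 0 (-(NormedSpace.exp (t • Au))) * T⁻¹

section decay
open scoped Matrix.Norms.Operator

lemma exp_mulVec_eig {m : ℕ} (M : Matrix (Fin m) (Fin m) ℂ) (μ : ℂ) (w : Fin m → ℂ)
    (h : M.mulVec w = μ • w) :
    (NormedSpace.exp M).mulVec w = (Complex.exp μ) • w := by
  have hp : ∀ n : ℕ, (M ^ n).mulVec w = μ ^ n • w := by
    intro n
    induction n with
    | zero => simp
    | succ n ih => rw [pow_succ, ← Matrix.mulVec_mulVec, h, Matrix.mulVec_smul, ih, smul_smul, pow_succ, mul_comm]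
  have h1 := NormedSpace.exp_series_hasSum_exp' (𝕂 := ℂ) M
  let L : Matrix (Fin m) (Fin m) ℂ →ₗ[ℂ] (Fin m → ℂ) :=
    { toFun := fun X => X.mulVec w
      map_add' := fun X Y => Matrix.add_mulVec X Y w
      map_smul' := fun c X => Matrix.smul_mulVec c X w }
  have h2 := h1.mapL (LinearMap.toContinuousLinearMap L)
  have h3 := (NormedSpace.exp_series_hasSum_exp' (𝕂 := ℂ) μ).smul_const w
  rw [← Complex.exp_eq_exp_ℂ] at h3
  refine h2.unique ?_
  have e : ∀ n : ℕ, (LinearMap.toContinuousLinearMap L) ((n.factorial⁻¹ : ℂ) • M ^ n) =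
      ((n.factorial⁻¹ : ℂ) • μ ^ n) • w := by
    intro n
    show ((n.factorial⁻¹ : ℂ) • M ^ n).mulVec w = _
    rw [Matrix.smul_mulVec, hp, smul_smul, smul_eq_mul]
  simp only [e]
  exact h3

lemma spectrum_exp_sub {m : ℕ} (M : Matrix (Fin m) (Fin m) ℂ) (l : ℂ)
    (hl : l ∈ spectrum ℂ (NormedSpace.exp M)) : ∃ μ ∈ spectrum ℂ M, l = Complex.exp μ := by
  rw [← Matrix.spectrum_toLin', ← Module.End.hasEigenvalue_iff_mem_spectrum] at hl
  set f : Module.End ℂ (Fin m → ℂ) := Matrix.toLin' (NormedSpace.exp M) with hf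
  have hc : Commute f (Matrix.toLin' M) := by
    have : Commute (NormedSpace.exp M) M := (Commute.refl M).exp_left
    show _ * _ = _ * _
    rw [Module.End.mul_eq_comp, Module.End.mul_eq_comp, ← Matrix.toLin'_mul, ← Matrix.toLin'_mul, this.eq]
  have hm : Set.MapsTo (Matrix.toLin' M) (f.eigenspace l) (f.eigenspace l) :=
    Module.End.mapsTo_genEigenspace_of_comm hc l 1
  have : Nontrivial (f.eigenspace l) := Submodule.nontrivial_iff_ne_bot.mpr hl
  obtain ⟨μ, hμ⟩ := Module.End.exists_eigenvalue ((Matrix.toLin' M).restrict hm)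
  obtain ⟨w, hw⟩ := hμ.exists_hasEigenvector
  have hw1 := hw.apply_eq_smul
  have hw2 : Matrix.toLin' M (w : Fin m → ℂ) = μ • (w : Fin m → ℂ) := by
    exact congrArg Subtype.val hw1
  have hw0 : (w : Fin m → ℂ) ≠ 0 := fun h => hw.2 (Subtype.ext h)
  refine ⟨μ, ?_, ?_⟩
  · rw [← Matrix.spectrum_toLin', ← Module.End.hasEigenvalue_iff_mem_spectrum]
    exact Module.End.hasEigenvalue_of_hasEigenvector ⟨Module.End.mem_eigenspace_iff.mpr hw2, hw0⟩
  · have h1 := exp_mulVec_eig M μ w (by simpa using hw2)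
    have h2 : f w = l • (w : Fin m → ℂ) := Module.End.mem_eigenspace_iff.mp w.2
    have h3 : f w = Complex.exp μ • (w : Fin m → ℂ) := by simpa [f] using h1
    exact smul_left_injective ℂ hw0 (h2.symm.trans h3)

lemma exp_decay_complex {m : ℕ} (M : Matrix (Fin m) (Fin m) ℂ)
    (h : ∀ μ ∈ spectrum ℂ M, μ.re < 0) :
    ∃ K a : ℝ, 0 < a ∧ ∀ t : ℝ, 0 ≤ t → ‖NormedSpace.exp (t • M)‖ ≤ K * Real.exp (-a * t) := by
  set N := NormedSpace.exp M with hN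
  have hr : spectralRadius ℂ N < 1 := by
    rcases Set.eq_empty_or_nonempty (spectrum ℂ N) with he | hne
    · simp [spectralRadius, he]
    · obtain ⟨l, hl, hl2⟩ := spectrum.exists_nnnorm_eq_spectralRadius_of_nonempty hne
      obtain ⟨μ, hμ, rfl⟩ := spectrum_exp_sub M l hl
      rw [← hl2]
      have : ‖Complex.exp μ‖ < 1 := by rw [Complex.norm_exp]; simpa using h μ hμ
      exact_mod_cast this
  obtain ⟨q, hq1, hq2⟩ := ENNReal.lt_iff_exists_nnreal_btwn.mp hr
  have hq2 : q < 1 := by exact_mod_cast hq2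
  have hev := (spectrum.pow_nnnorm_pow_one_div_tendsto_nhds_spectralRadius N).eventually_lt_const hq1
  obtain ⟨n0, hn0⟩ := Filter.eventually_atTop.mp hev
  have hn1 : ‖N ^ (n0+1)‖ ≤ (q:ℝ) ^ (n0+1) := by
    have h1 := hn0 (n0+1) (by omega)
    have h2 : (‖N ^ (n0+1)‖₊ : ENNReal) ≤ (q : ENNReal) ^ (((n0+1 : ℕ)):ℝ) := by
      rw [← ENNReal.rpow_inv_le_iff (by positivity)]
      simpa [one_div] using h1.le
    rw [ENNReal.rpow_natCast] at h2
    exact_mod_cast h2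
  -- choose rate
  set p := n0 + 1 with hp
  have hp0 : (0:ℝ) < p := by positivity
  set r : ℝ := max (q:ℝ) (1/2) with hrdef
  have hr0 : 0 < r := by positivity
  have hr1 : r < 1 := max_lt (by exact_mod_cast hq2) (by norm_num)
  have hNr : ‖N ^ p‖ ≤ r ^ p := hn1.trans (by gcongr; exact le_max_left _ _)
  have hcont : Continuous fun s : ℝ => ‖NormedSpace.exp (s • M)‖ := by
    have := NormedSpace.exp_continuous (𝔸 := Matrix (Fin m) (Fin m) ℂ)
    fun_prop
  obtain ⟨C, hC⟩ := (isCompact_Icc (a := (0:ℝ)) (b := p)).bddAbove_image hcont.continuousOn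
  have hC' : ∀ s ∈ Set.Icc (0:ℝ) p, ‖NormedSpace.exp (s • M)‖ ≤ C := fun s hs => hC ⟨s, hs, rfl⟩
  have hC0 : 0 ≤ C := (norm_nonneg _).trans (hC' 0 ⟨le_rfl, hp0.le⟩)
  have hlog : Real.log r < 0 := Real.log_neg hr0 hr1
  have hone : ‖(1 : Matrix (Fin m) (Fin m) ℂ)‖ ≤ 1 := by
    rcases isEmpty_or_nonempty (Fin m) with he | hne
    · rw [Subsingleton.elim (1 : Matrix (Fin m) (Fin m) ℂ) 0]; simp
    · simp
  have hpow : ∀ j : ℕ, ‖(N ^ p) ^ j‖ ≤ (r ^ p) ^ j := by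
    intro j
    induction j with
    | zero => simpa using hone
    | succ j ih =>
      rw [pow_succ, pow_succ]
      exact (norm_mul_le _ _).trans (mul_le_mul ih hNr (norm_nonneg _) (pow_nonneg (pow_nonneg hr0.le _) _))
  refine ⟨C * Real.exp (-Real.log r * p), -Real.log r, by linarith, fun t ht => ?_⟩
  set j := ⌊t / p⌋₊ with hj
  have hj1 : (j:ℝ) * p ≤ t := by
    have := Nat.floor_le (div_nonneg ht hp0.le); rwa [le_div_iff₀ hp0] at this
  have hj2 : t < (j + 1) * p := by
    have := Nat.lt_floor_add_one (t / p); rwa [div_lt_iff₀ hp0] at this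
  have hsplit : NormedSpace.exp (t • M) = NormedSpace.exp ((t - j * p) • M) * (N ^ p) ^ j := by
    rw [hN, ← Matrix.exp_nsmul, ← Matrix.exp_nsmul, ← Matrix.exp_add_of_commute]
    · congr 1
      rw [← Nat.cast_smul_eq_nsmul ℝ, ← Nat.cast_smul_eq_nsmul ℝ, smul_smul, ← add_smul]
      congr 1; ring
    · exact ((Commute.refl M).smul_left _).smul_right _ |>.smul_right _
  rw [hsplit]
  calc _ ≤ C * (r ^ p) ^ j := (norm_mul_le _ _).trans (by
        gcongr
        · exact hC' _ ⟨by linarith, by linarith⟩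
        · exact hpow j)
    _ = C * Real.exp (Real.log r * (j * p)) := by
        congr 1
        rw [Real.exp_mul, Real.exp_log hr0, mul_comm, Real.rpow_mul hr0.le, Real.rpow_natCast, Real.rpow_natCast]
    _ ≤ C * Real.exp (-Real.log r * p + -(-Real.log r) * t) := by
        gcongr
        nlinarith
    _ = _ := by rw [Real.exp_add]; ring

lemma exp_decay_real {m : ℕ} (M : Matrix (Fin m) (Fin m) ℝ)
    (h : ∀ μ ∈ spectrum ℂ (M.map Complex.ofReal), μ.re < 0) :
    ∃ K a : ℝ, 0 < a ∧ ∀ t : ℝ, 0 ≤ t → ‖NormedSpace.exp (t • M)‖ ≤ K * Real.exp (-a * t) := by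
  obtain ⟨K, a, ha, hK⟩ := exp_decay_complex _ h
  refine ⟨K, a, ha, fun t ht => ?_⟩
  convert hK t ht using 1
  have h1 : NormedSpace.exp (t • M.map Complex.ofReal) = (NormedSpace.exp (t • M)).map Complex.ofReal := by
    have := NormedSpace.map_exp (Complex.ofRealHom.mapMatrix (m := Fin m)) (by
      exact Continuous.matrix_map continuous_id Complex.continuous_ofReal) (t • M)
    have e : (Complex.ofRealHom.mapMatrix (m := Fin m)) (t • M) = t • M.map Complex.ofReal := by
      ext i j; simp
    rw [e] at this
    exact this.symm
  rw [h1]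
  simp [Matrix.linfty_opNorm_def]

/-- transfer of decay through a linear map -/
lemma exp_decay_lin {m : ℕ} {F : Type*} [NormedAddCommGroup F] [NormedSpace ℝ F]
    (L : Matrix (Fin m) (Fin m) ℝ →ₗ[ℝ] F) (M : Matrix (Fin m) (Fin m) ℝ)
    (h : ∀ μ ∈ spectrum ℂ (M.map Complex.ofReal), μ.re < 0) :
    ∃ K a : ℝ, 0 < a ∧ ∀ t : ℝ, 0 ≤ t → ‖L (NormedSpace.exp (t • M))‖ ≤ K * Real.exp (-a * t) := by
  obtain ⟨K, a, ha, hK⟩ := exp_decay_real _ h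
  obtain ⟨c, hc, hL⟩ := SemilinearMapClass.bound_of_continuous L L.continuous_of_finiteDimensional
  refine ⟨c * K, a, ha, fun t ht => ?_⟩
  rw [mul_assoc]
  exact (hL _).trans (by gcongr; exact hK t ht)
end decay

section abs
variable {E : Type*} [NormedAddCommGroup E] [NormedSpace ℝ E] [CompleteSpace E]

lemma expB_add (B : E →L[ℝ] E) (s t : ℝ) : NormedSpace.exp ((s + t) • B) =
    NormedSpace.exp (s • B) * NormedSpace.exp (t • B) := by
  let _ : NormedAlgebra ℚ (E →L[ℝ] E) := NormedAlgebra.restrictScalars ℚ ℝ _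
  rw [add_smul, NormedSpace.exp_add_of_commute]
  exact ((Commute.refl B).smul_left _).smul_right _

lemma expB_cont (B : E →L[ℝ] E) : Continuous fun t : ℝ => NormedSpace.exp (t • B) := by
  let _ : NormedAlgebra ℚ (E →L[ℝ] E) := NormedAlgebra.restrictScalars ℚ ℝ _
  have := NormedSpace.exp_continuous (𝔸 := E →L[ℝ] E)
  fun_prop

lemma hom_sol (B : E →L[ℝ] E) (z : ℝ → E) (hz : ∀ t, HasDerivAt z (B (z t)) t) (s t : ℝ) :
    z t = NormedSpace.exp ((t - s) • B) (z s) := by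
  have hd : ∀ t, HasDerivAt (fun t => NormedSpace.exp ((-t) • B) (z t)) 0 t := by
    intro t
    have h1 := (hasDerivAt_exp_smul_const B (-t)).scomp t (hasDerivAt_neg t)
    have h2 := h1.clm_apply (hz t)
    have e : ((-1 : ℝ) • (NormedSpace.exp (-t • B) * B)) (z t) +
        (((fun u : ℝ => NormedSpace.exp (u • B)) ∘ Neg.neg) t) (B (z t)) = 0 := by
      simp
    exact e ▸ h2
  have hc := is_const_of_deriv_eq_zero (fun t => (hd t).differentiableAt) (fun t => (hd t).deriv) t s
  have h3 := congrArg (fun v => (NormedSpace.exp (t • B) : E →L[ℝ] E) v) hc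
  beta_reduce at h3
  rw [← mul_apply_eq_comp, ← mul_apply_eq_comp, ← expB_add, ← expB_add] at h3
  simpa [sub_eq_add_neg] using h3

theorem abstract_green (B P Q : E →L[ℝ] E) (hPQ : P + Q = 1) (hP : Commute B P) (hQ : Commute B Q)
    (K1 a : ℝ) (ha : 0 < a) (K2 b : ℝ) (hb : 0 < b)
    (h1 : ∀ t : ℝ, 0 ≤ t → ‖NormedSpace.exp (t • B) * P‖ ≤ K1 * Real.exp (-a * t))
    (h2 : ∀ t : ℝ, 0 ≤ t → ‖NormedSpace.exp ((-t) • B) * Q‖ ≤ K2 * Real.exp (-b * t))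
    (G : ℝ → E →L[ℝ] E) (hG1 : ∀ t, 0 ≤ t → G t = NormedSpace.exp (t • B) * P)
    (hG2 : ∀ t, t < 0 → G t = -(NormedSpace.exp (t • B) * Q))
    (g : ℝ → E) (hgc : Continuous g) (hgb : ∃ C : ℝ, ∀ t : ℝ, ‖g t‖ ≤ C) :
    (∀ t : ℝ, Integrable (fun τ => G (t - τ) (g τ))) ∧
    (∃ C : ℝ, ∀ t : ℝ, ‖∫ τ : ℝ, G (t - τ) (g τ)‖ ≤ C) ∧
    (∀ t : ℝ, HasDerivAt (fun s => ∫ τ : ℝ, G (s - τ) (g τ))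
      (B (∫ τ : ℝ, G (t - τ) (g τ)) + g t) t) ∧
    (∀ y : ℝ → E, (∀ t : ℝ, HasDerivAt y (B (y t) + g t) t) →
      (∃ C : ℝ, ∀ t : ℝ, ‖y t‖ ≤ C) → ∀ t : ℝ, y t = ∫ τ : ℝ, G (t - τ) (g τ)) := by
  obtain ⟨C, hC⟩ := hgb
  have hC0 : 0 ≤ C := (norm_nonneg _).trans (hC 0)
  have hK1 : 0 ≤ K1 := by simpa using (norm_nonneg _).trans (h1 0 le_rfl)
  have hK2 : 0 ≤ K2 := by simpa using (norm_nonneg _).trans (h2 0 le_rfl)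
  have hcont := expB_cont B
  have hc1 : ∀ t : ℝ, Continuous fun τ => (NormedSpace.exp ((t - τ) • B) * P) (g τ) := fun t =>
    ((hcont.comp (continuous_const.sub continuous_id)).mul continuous_const).clm_apply hgc
  have hc2 : ∀ t : ℝ, Continuous fun τ => (NormedSpace.exp ((t - τ) • B) * Q) (g τ) := fun t =>
    ((hcont.comp (continuous_const.sub continuous_id)).mul continuous_const).clm_apply hgc
  -- bounding functions
  have hb1 : ∀ t τ : ℝ, τ ≤ t → ‖(NormedSpace.exp ((t - τ) • B) * P) (g τ)‖ ≤
      (K1 * C) * Real.exp (-a * |t - τ|) := by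
    intro t τ h
    rw [abs_of_nonneg (by linarith)]
    calc _ ≤ _ := ContinuousLinearMap.le_opNorm _ _
      _ ≤ (K1 * Real.exp (-a * (t - τ))) * C := by
        gcongr
        · exact h1 _ (by linarith)
        · exact hC _
      _ = _ := by ring
  have hb2 : ∀ t τ : ℝ, t ≤ τ → ‖(NormedSpace.exp ((t - τ) • B) * Q) (g τ)‖ ≤
      (K2 * C) * Real.exp (-b * |t - τ|) := by
    intro t τ h
    rw [abs_of_nonpos (by linarith)]
    calc _ ≤ _ := ContinuousLinearMap.le_opNorm _ _
      _ ≤ (K2 * Real.exp (-b * (-(t - τ)))) * C := by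
        gcongr
        · simpa using h2 (-(t - τ)) (by linarith)
        · exact hC _
      _ = _ := by ring
  have hexpI : ∀ c : ℝ, 0 < c → ∀ t : ℝ, Integrable (fun τ : ℝ => Real.exp (-c * |t - τ|)) := by
    intro c hc t
    have : Integrable (fun x : ℝ => Real.exp (-c * |x|)) := by
      rw [← integrableOn_univ, ← Set.Iic_union_Ioi (a := (0:ℝ))]
      refine IntegrableOn.union ?_ ?_
      · refine (integrableOn_congr_fun (fun x hx => ?_) measurableSet_Iic).mpr
          (integrableOn_exp_mul_Iic hc 0)
        simp only [abs_of_nonpos (Set.mem_Iic.mp hx)]; ring_nf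
      · refine (integrableOn_congr_fun (fun x hx => ?_) measurableSet_Ioi).mpr
          (integrableOn_exp_mul_Ioi (neg_lt_zero.mpr hc) 0)
        simp only [abs_of_pos (Set.mem_Ioi.mp hx)]
    exact this.comp_sub_left t
  have hi1 : ∀ t, IntegrableOn (fun τ => (NormedSpace.exp ((t - τ) • B) * P) (g τ)) (Set.Iic t) := by
    intro t
    refine Integrable.mono' (((hexpI a ha t).const_mul (K1 * C)).integrableOn) (hc1 t).aestronglyMeasurable ?_
    exact (ae_restrict_iff' measurableSet_Iic).mpr (.of_forall fun τ h => hb1 t τ h)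
  have hi2 : ∀ t, IntegrableOn (fun τ => (NormedSpace.exp ((t - τ) • B) * Q) (g τ)) (Set.Ioi t) := by
    intro t
    refine Integrable.mono' (((hexpI b hb t).const_mul (K2 * C)).integrableOn) (hc2 t).aestronglyMeasurable ?_
    exact (ae_restrict_iff' measurableSet_Ioi).mpr (.of_forall fun τ h => hb2 t τ (le_of_lt h))
  have hG1' : ∀ t, Set.EqOn (fun τ => G (t - τ) (g τ))
      (fun τ => (NormedSpace.exp ((t - τ) • B) * P) (g τ)) (Set.Iic t) := by
    intro t τ h
    simp only [hG1 (t - τ) (sub_nonneg.mpr h)]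
  have hG2' : ∀ t, Set.EqOn (fun τ => G (t - τ) (g τ))
      (fun τ => -((NormedSpace.exp ((t - τ) • B) * Q) (g τ))) (Set.Ioi t) := by
    intro t τ h
    simp only [hG2 (t - τ) (sub_neg.mpr h)]; rfl
  have hGi1 : ∀ t, IntegrableOn (fun τ => G (t - τ) (g τ)) (Set.Iic t) := fun t =>
    (integrableOn_congr_fun (hG1' t) measurableSet_Iic).mpr (hi1 t)
  have hGi2 : ∀ t, IntegrableOn (fun τ => G (t - τ) (g τ)) (Set.Ioi t) := fun t =>
    (integrableOn_congr_fun (hG2' t) measurableSet_Ioi).mpr (hi2 t).neg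
  have hint : ∀ t : ℝ, Integrable (fun τ => G (t - τ) (g τ)) := by
    intro t
    rw [← integrableOn_univ, ← Set.Iic_union_Ioi (a := t)]
    exact (hGi1 t).union (hGi2 t)
  have hbdd : ∃ C : ℝ, ∀ t : ℝ, ‖∫ τ : ℝ, G (t - τ) (g τ)‖ ≤ C := by
    refine ⟨∫ x : ℝ, (K1 * C * Real.exp (-a * |x|) + K2 * C * Real.exp (-b * |x|)), fun t => ?_⟩
    rw [← integral_sub_left_eq_self (fun x : ℝ => K1 * C * Real.exp (-a * |x|) +
      K2 * C * Real.exp (-b * |x|)) volume t]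
    refine norm_integral_le_of_norm_le (((hexpI a ha t).const_mul _).add ((hexpI b hb t).const_mul _))
      (.of_forall fun τ => ?_)
    rcases le_or_gt τ t with h | h
    · have e := hG1' t h
      simp only at e
      rw [e]
      exact (hb1 t τ h).trans (le_add_of_nonneg_right (by positivity))
    · have e := hG2' t h
      simp only at e
      rw [e, norm_neg]
      exact (hb2 t τ h.le).trans (le_add_of_nonneg_left (by positivity))
  -- the representation
  have hsp : ∀ (R : E →L[ℝ] E) (t τ : ℝ), (NormedSpace.exp ((t - τ) • B) * R) (g τ) =
      NormedSpace.exp (t • B) ((NormedSpace.exp ((0 - τ) • B) * R) (g τ)) := by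
    intro R t τ
    have : t - τ = t + (0 - τ) := by ring
    rw [this, expB_add]; rfl
  have hi1' : ∀ t, IntegrableOn (fun τ => (NormedSpace.exp ((0 - τ) • B) * P) (g τ)) (Set.Iic t) := by
    intro t
    have := ContinuousLinearMap.integrable_comp (NormedSpace.exp ((-t) • B)) (hi1 t)
    refine this.congr (.of_forall fun τ => ?_)
    simp only
    rw [hsp P t τ, ← mul_apply_eq_comp, ← expB_add]
    simp
  have hi2' : ∀ t, IntegrableOn (fun τ => (NormedSpace.exp ((0 - τ) • B) * Q) (g τ)) (Set.Ioi t) := by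
    intro t
    have := ContinuousLinearMap.integrable_comp (NormedSpace.exp ((-t) • B)) (hi2 t)
    refine this.congr (.of_forall fun τ => ?_)
    simp only
    rw [hsp Q t τ, ← mul_apply_eq_comp, ← expB_add]
    simp
  have hcg : Continuous fun τ : ℝ => NormedSpace.exp ((0 - τ) • B) (g τ) :=
    (hcont.comp (continuous_const.sub continuous_id)).clm_apply hgc
  set c : E := (∫ τ in Set.Iic (0:ℝ), (NormedSpace.exp ((0 - τ) • B) * P) (g τ)) -
    ∫ τ in Set.Ioi (0:ℝ), (NormedSpace.exp ((0 - τ) • B) * Q) (g τ) with hc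
  have hrep : ∀ t : ℝ, ∫ τ : ℝ, G (t - τ) (g τ) =
      NormedSpace.exp (t • B) (c + ∫ τ in (0:ℝ)..t, NormedSpace.exp ((0 - τ) • B) (g τ)) := by
    intro t
    rw [← intervalIntegral.integral_Iic_add_Ioi (hGi1 t) (hGi2 t),
      setIntegral_congr_fun measurableSet_Iic (hG1' t), setIntegral_congr_fun measurableSet_Ioi (hG2' t),
      integral_neg]
    simp only [hsp P t, hsp Q t]
    rw [ContinuousLinearMap.integral_comp_comm _ (hi1' t), ContinuousLinearMap.integral_comp_comm _ (hi2' t),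
      ← map_neg, ← map_add]
    congr 1
    have e1 := intervalIntegral.integral_Iic_sub_Iic (hi1' 0) (hi1' t)
    have e2 := intervalIntegral.integral_Ioi_sub_Ioi' (hi2' 0) (hi2' t)
    have e3 : ∫ τ in (0:ℝ)..t, NormedSpace.exp ((0 - τ) • B) (g τ) =
        (∫ τ in (0:ℝ)..t, (NormedSpace.exp ((0 - τ) • B) * P) (g τ)) +
        ∫ τ in (0:ℝ)..t, (NormedSpace.exp ((0 - τ) • B) * Q) (g τ) := by
      rw [← intervalIntegral.integral_add ((hc1 0).intervalIntegrable _ _) ((hc2 0).intervalIntegrable _ _)]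
      congr 1
      ext τ
      rw [← add_apply, ← mul_add, hPQ, mul_one]
    rw [e3, ← e1, ← e2, hc]
    abel
  have hder : ∀ t : ℝ, HasDerivAt (fun s => ∫ τ : ℝ, G (s - τ) (g τ))
      (B (∫ τ : ℝ, G (t - τ) (g τ)) + g t) t := by
    intro t
    have hf : (fun s => ∫ τ : ℝ, G (s - τ) (g τ)) = fun s =>
      NormedSpace.exp (s • B) (c + ∫ τ in (0:ℝ)..s, NormedSpace.exp ((0 - τ) • B) (g τ)) := funext hrep
    rw [hf, hrep]
    have d1 := (hcg.integral_hasStrictDerivAt 0 t).hasDerivAt.const_add c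
    have d2 := (hasDerivAt_exp_smul_const' B t).clm_apply d1
    convert d2 using 1
    congr 1
    rw [← mul_apply_eq_comp, ← expB_add]
    simp
  refine ⟨hint, hbdd, hder, ?_⟩
  rintro y hy ⟨Cy, hCy⟩ t
  obtain ⟨Cx, hCx⟩ := hbdd
  set z : ℝ → E := fun s => y s - ∫ τ : ℝ, G (s - τ) (g τ) with hz
  have hzd : ∀ t, HasDerivAt z (B (z t)) t := by
    intro t
    have e : B (z t) = B (y t) + g t - (B (∫ τ : ℝ, G (t - τ) (g τ)) + g t) := by
      show B (y t - ∫ τ : ℝ, G (t - τ) (g τ)) = _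
      rw [map_sub]; abel
    rw [e]
    exact (hy t).sub (hder t)
  have hzb : ∀ t, ‖z t‖ ≤ Cy + Cx := fun t => (norm_sub_le _ _).trans (add_le_add (hCy t) (hCx t))
  have hD0 : 0 ≤ Cy + Cx := (norm_nonneg _).trans (hzb 0)
  have hcomm : ∀ R : E →L[ℝ] E, Commute B R → ∀ s, R (z t) = (NormedSpace.exp ((t - s) • B) * R) (z s) := by
    intro R hR s
    have : Commute (NormedSpace.exp ((t - s) • B)) R := (hR.smul_left (t - s)).exp_left
    rw [this.eq, mul_apply_eq_comp, ← hom_sol B z hzd]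
  have hlim : ∀ (K c : ℝ), 0 < c → Filter.Tendsto (fun s : ℝ => K * Real.exp (-c * s) * (Cy + Cx))
      Filter.atTop (nhds 0) := by
    intro K c hc
    have : Filter.Tendsto (fun s : ℝ => Real.exp (-c * s)) Filter.atTop (nhds 0) :=
      Real.tendsto_exp_atBot.comp (Filter.tendsto_id.const_mul_atTop_of_neg (by linarith))
    simpa using (this.const_mul K).mul_const (Cy + Cx)
  have hPz : P (z t) = 0 := by
    rw [← norm_le_zero_iff]
    refine ge_of_tendsto (hlim K1 a ha) ?_
    filter_upwards [Filter.eventually_ge_atTop 0] with s hs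
    rw [hcomm P hP (t - s)]
    refine (ContinuousLinearMap.le_opNorm _ _).trans ?_
    gcongr
    · simpa using h1 s hs
    · exact hzb _
  have hQz : Q (z t) = 0 := by
    rw [← norm_le_zero_iff]
    refine ge_of_tendsto (hlim K2 b hb) ?_
    filter_upwards [Filter.eventually_ge_atTop 0] with s hs
    rw [hcomm Q hQ (t + s)]
    refine (ContinuousLinearMap.le_opNorm _ _).trans ?_
    gcongr
    · simpa using h2 s hs
    · exact hzb _
  have : z t = 0 := by
    have := congrArg (fun R : E →L[ℝ] E => R (z t)) hPQ
    simpa [hPz, hQz] using this.symm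
  exact sub_eq_zero.mp this
end abs

section fin
open scoped Matrix.Norms.Operator

lemma exp_fromBlocks_diag {m k : ℕ} (X : Matrix (Fin m) (Fin m) ℝ) (Y : Matrix (Fin k) (Fin k) ℝ) :
    NormedSpace.exp (Matrix.fromBlocks X 0 0 Y) =
      Matrix.fromBlocks (NormedSpace.exp X) 0 0 (NormedSpace.exp Y) := by
  let F : (Matrix (Fin m) (Fin m) ℝ × Matrix (Fin k) (Fin k) ℝ) →+*
      Matrix (Fin m ⊕ Fin k) (Fin m ⊕ Fin k) ℝ :=
    { toFun := fun p => Matrix.fromBlocks p.1 0 0 p.2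
      map_one' := Matrix.fromBlocks_one
      map_zero' := Matrix.fromBlocks_zero
      map_add' := fun p q => by simp [Matrix.fromBlocks_add]
      map_mul' := fun p q => by simp [Matrix.fromBlocks_multiply] }
  have hF : Continuous F :=
    Continuous.matrix_fromBlocks continuous_fst continuous_const continuous_const continuous_snd
  have h := NormedSpace.map_exp F hF (X, Y)
  have h' : Matrix.fromBlocks (NormedSpace.exp (X, Y)).1 0 0 (NormedSpace.exp (X, Y)).2 =
    NormedSpace.exp (Matrix.fromBlocks X 0 0 Y) := h
  have e1 : (NormedSpace.exp (X, Y)).1 = NormedSpace.exp X :=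
    NormedSpace.map_exp (RingHom.fst (Matrix (Fin m) (Fin m) ℝ) (Matrix (Fin k) (Fin k) ℝ))
      continuous_fst (X, Y)
  have e2 : (NormedSpace.exp (X, Y)).2 = NormedSpace.exp Y :=
    NormedSpace.map_exp (RingHom.snd (Matrix (Fin m) (Fin m) ℝ) (Matrix (Fin k) (Fin k) ℝ))
      continuous_snd (X, Y)
  rw [e1, e2] at h'
  exact h'.symm

lemma exp_conj_block {m k : ℕ} (A T : Matrix (Fin m ⊕ Fin k) (Fin m ⊕ Fin k) ℝ)
    (As : Matrix (Fin m) (Fin m) ℝ) (Au : Matrix (Fin k) (Fin k) ℝ)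
    (hT : IsUnit T.det) (hA : A = T * Matrix.fromBlocks As 0 0 Au * T⁻¹) (t : ℝ) :
    NormedSpace.exp (t • A) =
      T * Matrix.fromBlocks (NormedSpace.exp (t • As)) 0 0 (NormedSpace.exp (t • Au)) * T⁻¹ := by
  have e : t • A = T * Matrix.fromBlocks (t • As) 0 0 (t • Au) * T⁻¹ := by
    have : Matrix.fromBlocks (t • As) 0 0 (t • Au) = t • Matrix.fromBlocks As 0 0 Au := by
      simp [Matrix.fromBlocks_smul]
    rw [this, hA]; simp
  rw [e, Matrix.exp_conj _ _ ((Matrix.isUnit_iff_isUnit_det _).mpr hT), exp_fromBlocks_diag]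

lemma exp_toEuclideanCLM {n : Type*} [Fintype n] [DecidableEq n] (M : Matrix n n ℝ) :
    NormedSpace.exp (Matrix.toEuclideanCLM (n := n) (𝕜 := ℝ) M) =
      Matrix.toEuclideanCLM (n := n) (𝕜 := ℝ) (NormedSpace.exp M) := by
  have hc : Continuous (Matrix.toEuclideanCLM (n := n) (𝕜 := ℝ)) :=
    LinearMap.continuous_of_finiteDimensional
      ((Matrix.toEuclideanCLM (n := n) (𝕜 := ℝ)).toAlgEquiv.toLinearMap)
  exact (NormedSpace.map_exp (Matrix.toEuclideanCLM (n := n) (𝕜 := ℝ)) hc M).symm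
end fin

/-- let `T⁻¹ A T = blockdiag(A_s, A_u)` with `A_s` having all eigenvalues of
negative real part and `A_u` all eigenvalues of positive real part, and let `G` be the
associated Green's function.  Then for every continuous bounded `g`, the improper integral
`y(t) = ∫_{-∞}^{∞} G(t−τ) g(τ) dτ` converges for all `t`, is bounded, solves
`ẏ = A y + g(t)` on `ℝ`, and is the unique solution bounded on `ℝ`. -/
theorem stmt_2 {m k : ℕ} (A T : Matrix (Fin m ⊕ Fin k) (Fin m ⊕ Fin k) ℝ)
    (As : Matrix (Fin m) (Fin m) ℝ) (Au : Matrix (Fin k) (Fin k) ℝ)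
    (hT : IsUnit T.det)
    (hblock : T⁻¹ * A * T = Matrix.fromBlocks As 0 0 Au)
    (hAs : ∀ μ ∈ spectrum ℂ (As.map Complex.ofReal), μ.re < 0)
    (hAu : ∀ μ ∈ spectrum ℂ (Au.map Complex.ofReal), 0 < μ.re)
    (g : ℝ → EuclideanSpace ℝ (Fin m ⊕ Fin k))
    (hgc : Continuous g) (hgb : ∃ C : ℝ, ∀ t : ℝ, ‖g t‖ ≤ C) :
    (∀ t : ℝ, Integrable (fun τ => Matrix.toEuclideanLin (greenFun T As Au (t - τ)) (g τ))) ∧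
    (∃ C : ℝ, ∀ t : ℝ,
      ‖∫ τ : ℝ, Matrix.toEuclideanLin (greenFun T As Au (t - τ)) (g τ)‖ ≤ C) ∧
    (∀ t : ℝ, HasDerivAt
      (fun s => ∫ τ : ℝ, Matrix.toEuclideanLin (greenFun T As Au (s - τ)) (g τ))
      (Matrix.toEuclideanLin A (∫ τ : ℝ, Matrix.toEuclideanLin (greenFun T As Au (t - τ)) (g τ))
        + g t) t) ∧
    (∀ y : ℝ → EuclideanSpace ℝ (Fin m ⊕ Fin k),
      (∀ t : ℝ, HasDerivAt y (Matrix.toEuclideanLin A (y t) + g t) t) →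
      (∃ C : ℝ, ∀ t : ℝ, ‖y t‖ ≤ C) →
      ∀ t : ℝ, y t = ∫ τ : ℝ, Matrix.toEuclideanLin (greenFun T As Au (t - τ)) (g τ)) := by
  have hTT : T⁻¹ * T = 1 := Matrix.nonsing_inv_mul _ hT
  have hTT' : T * T⁻¹ = 1 := Matrix.mul_nonsing_inv _ hT
  have hA : A = T * Matrix.fromBlocks As 0 0 Au * T⁻¹ := by
    rw [← hblock]
    calc A = (T * T⁻¹) * A * (T * T⁻¹) := by rw [hTT', one_mul, mul_one]
      _ = _ := by simp only [mul_assoc]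
  have hmul : ∀ X Y : Matrix (Fin m ⊕ Fin k) (Fin m ⊕ Fin k) ℝ,
      (T * X * T⁻¹) * (T * Y * T⁻¹) = T * (X * Y) * T⁻¹ := by
    intro X Y
    calc _ = T * X * (T⁻¹ * T) * Y * T⁻¹ := by simp only [mul_assoc]
      _ = _ := by rw [hTT, mul_one]; simp only [mul_assoc]
  have hAu' : ∀ μ ∈ spectrum ℂ ((-Au).map Complex.ofReal), μ.re < 0 := by
    intro μ hμ
    have e : (-Au).map Complex.ofReal = -(Au.map Complex.ofReal) := by
      ext i j; simp
    rw [e, ← spectrum.neg_eq, Set.mem_neg] at hμ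
    have := hAu _ hμ
    simpa using this
  let φ := Matrix.toEuclideanCLM (n := Fin m ⊕ Fin k) (𝕜 := ℝ)
  let L1 : Matrix (Fin m) (Fin m) ℝ →ₗ[ℝ]
      (EuclideanSpace ℝ (Fin m ⊕ Fin k) →L[ℝ] EuclideanSpace ℝ (Fin m ⊕ Fin k)) :=
    { toFun := fun X => φ (T * Matrix.fromBlocks X 0 0 0 * T⁻¹)
      map_add' := fun X Y => by
        rw [← map_add, ← add_mul, ← mul_add]; simp [Matrix.fromBlocks_add]
      map_smul' := fun c X => by
        have : Matrix.fromBlocks (c • X) 0 0 (0 : Matrix (Fin k) (Fin k) ℝ) =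
          c • Matrix.fromBlocks X 0 0 0 := by simp [Matrix.fromBlocks_smul]
        rw [this, mul_smul_comm, smul_mul_assoc, map_smul]; rfl }
  let L2 : Matrix (Fin k) (Fin k) ℝ →ₗ[ℝ]
      (EuclideanSpace ℝ (Fin m ⊕ Fin k) →L[ℝ] EuclideanSpace ℝ (Fin m ⊕ Fin k)) :=
    { toFun := fun X => φ (T * Matrix.fromBlocks 0 0 0 X * T⁻¹)
      map_add' := fun X Y => by
        rw [← map_add, ← add_mul, ← mul_add]; simp [Matrix.fromBlocks_add]
      map_smul' := fun c X => by
        have : Matrix.fromBlocks (0 : Matrix (Fin m) (Fin m) ℝ) 0 0 (c • X) =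
          c • Matrix.fromBlocks 0 0 0 X := by simp [Matrix.fromBlocks_smul]
        rw [this, mul_smul_comm, smul_mul_assoc, map_smul]; rfl }
  obtain ⟨K1, a, ha, hK1⟩ := exp_decay_lin L1 As hAs
  obtain ⟨K2, b, hb, hK2⟩ := exp_decay_lin L2 (-Au) hAu'
  have hexp : ∀ t : ℝ, NormedSpace.exp (t • φ A) = φ (T * Matrix.fromBlocks
      (NormedSpace.exp (t • As)) 0 0 (NormedSpace.exp (t • Au)) * T⁻¹) := by
    intro t
    rw [← exp_conj_block A T As Au hT hA t, ← map_smul]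
    exact exp_toEuclideanCLM _
  have hE1 : ∀ t : ℝ, NormedSpace.exp (t • φ A) * L1 1 = L1 (NormedSpace.exp (t • As)) := by
    intro t
    show _ * φ _ = φ _
    rw [hexp, ← map_mul, hmul]
    simp [Matrix.fromBlocks_multiply]
  have hE2 : ∀ t : ℝ, NormedSpace.exp (t • φ A) * L2 1 = L2 (NormedSpace.exp (t • Au)) := by
    intro t
    show _ * φ _ = φ _
    rw [hexp, ← map_mul, hmul]
    simp [Matrix.fromBlocks_multiply]
  have hPQ : L1 1 + L2 1 = 1 := by
    show φ _ + φ _ = 1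
    rw [← map_add, ← add_mul, ← mul_add]
    simp [Matrix.fromBlocks_add, Matrix.fromBlocks_one, hTT']
  have hP : Commute (φ A) (L1 1) := by
    show φ A * φ _ = φ _ * φ A
    rw [← map_mul, ← map_mul]
    rw [hA]
    rw [hmul, hmul]
    simp [Matrix.fromBlocks_multiply]
  have hQ : Commute (φ A) (L2 1) := by
    show φ A * φ _ = φ _ * φ A
    rw [← map_mul, ← map_mul]
    rw [hA]
    rw [hmul, hmul]
    simp [Matrix.fromBlocks_multiply]
  have key := abstract_green (φ A) (L1 1) (L2 1) hPQ hP hQ K1 a ha K2 b hb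
    (fun t ht => by rw [hE1]; exact hK1 t ht)
    (fun t ht => by
      rw [hE2]
      have := hK2 t ht
      rwa [smul_neg, ← neg_smul] at this)
    (fun t => φ (greenFun T As Au t))
    (fun t ht => by
      rw [hE1]
      simp only [greenFun, if_pos ht]; rfl)
    (fun t ht => by
      rw [hE2, ← map_neg]
      simp only [greenFun, if_neg (not_le.mpr ht)]; rfl)
    g hgc hgb
  exact key
end

section
/- Let A ∈ ℝ^{n×n}, let E ⊆ ℝⁿ be a linear subspace with A E ⊆ E, and suppose there is κ > 0 such that every eigenvalue λ (over ℂ) of the restriction of A to E satisfies Re λ < −κ. Then there exists a constant K ≥ 1 such that ‖e^{At} x‖ ≤ K e^{−κt} ‖x‖ for all x ∈ E and all t ≥ 0. -/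
open scoped TensorProduct

section helpers
attribute [local instance] Matrix.linftyOpNormedRing Matrix.linftyOpNormedAlgebra

theorem aux_exp_nilp {n : ℕ} (N : Matrix (Fin n) (Fin n) ℂ) (w : Fin n → ℂ) (k : ℕ)
    (h : (N ^ k).mulVec w = 0) (t : ℝ) :
    (NormedSpace.exp ((t : ℂ) • N)).mulVec w
      = ∑ j ∈ Finset.range k, ((t : ℂ) ^ j / (j.factorial : ℂ)) • (N ^ j).mulVec w := by
  have h1 := NormedSpace.exp_series_hasSum_exp' (𝕂 := ℂ) ((t : ℂ) • N)
  let L : Matrix (Fin n) (Fin n) ℂ →ₗ[ℂ] (Fin n → ℂ) :=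
    { toFun := fun M => M.mulVec w
      map_add' := fun a b => Matrix.add_mulVec a b w
      map_smul' := fun c a => Matrix.smul_mulVec c a w }
  have h2 := h1.mapL (LinearMap.toContinuousLinearMap L)
  have h3 : ∀ j, (LinearMap.toContinuousLinearMap L)
      (((j.factorial : ℂ)⁻¹) • ((t : ℂ) • N) ^ j)
      = ((t : ℂ) ^ j / (j.factorial : ℂ)) • (N ^ j).mulVec w := by
    intro j
    show (((j.factorial : ℂ)⁻¹) • ((t : ℂ) • N) ^ j).mulVec w = _
    rw [smul_pow, smul_smul, Matrix.smul_mulVec, div_eq_inv_mul]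
  simp only [h3] at h2
  refine h2.unique (hasSum_sum_of_ne_finset_zero ?_)
  intro j hj
  have hj' : k ≤ j := by simpa using hj
  obtain ⟨m, rfl⟩ := Nat.exists_eq_add_of_le hj'
  rw [add_comm k m, pow_add N, ← Matrix.mulVec_mulVec, h, Matrix.mulVec_zero, smul_zero]

theorem aux_exp_shift {n : ℕ} (A : Matrix (Fin n) (Fin n) ℂ) (μ : ℂ) (t : ℝ) :
    NormedSpace.exp ((t : ℂ) • A)
      = Complex.exp (t * μ) • NormedSpace.exp ((t : ℂ) • (A - μ • (1 : Matrix (Fin n) (Fin n) ℂ))) := by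
  have e : (t : ℂ) • A = algebraMap ℂ (Matrix (Fin n) (Fin n) ℂ) (t * μ)
      + (t : ℂ) • (A - μ • (1 : Matrix (Fin n) (Fin n) ℂ)) := by
    rw [Algebra.algebraMap_eq_smul_one, smul_sub, smul_smul]; abel
  have e2 : algebraMap ℂ (Matrix (Fin n) (Fin n) ℂ) (NormedSpace.exp (t * μ))
      = NormedSpace.exp (algebraMap ℂ (Matrix (Fin n) (Fin n) ℂ) (t * μ)) :=
    NormedSpace.algebraMap_exp_comm (𝕂 := ℂ) (𝔸 := Matrix (Fin n) (Fin n) ℂ) (t * μ)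
  conv_lhs => rw [e]
  rw [Matrix.exp_add_of_commute _ _ (Algebra.commute_algebraMap_left _ _),
    ← e2, Complex.exp_eq_exp_ℂ]
  exact (Algebra.smul_def _ _).symm

theorem aux_exp_map {n : ℕ} (A : Matrix (Fin n) (Fin n) ℝ) (t : ℝ) :
    NormedSpace.exp ((t : ℂ) • A.map Complex.ofReal)
      = (NormedSpace.exp (t • A)).map Complex.ofReal := by
  have := NormedSpace.map_exp (Complex.ofRealHom.mapMatrix (m := Fin n))
    (Continuous.matrix_map continuous_id Complex.continuous_ofReal) (t • A)
  have e : (Complex.ofRealHom.mapMatrix (m := Fin n)) (t • A) = (t : ℂ) • A.map Complex.ofReal := by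
    ext i j; simp
  rw [e] at this
  exact this.symm

end helpers

theorem aux_decay {n : ℕ} (A : Matrix (Fin n) (Fin n) ℂ) (κ : ℝ) (μ : ℂ) (hμ : μ.re < -κ)
    (w : Fin n → ℂ) (k : ℕ)
    (h : ((A - μ • (1 : Matrix (Fin n) (Fin n) ℂ)) ^ k).mulVec w = 0) :
    ∃ C : ℝ, ∀ t : ℝ, 0 ≤ t →
      ‖(NormedSpace.exp ((t : ℂ) • A)).mulVec w‖ ≤ C * Real.exp (-κ * t) := by
  set N := A - μ • (1 : Matrix (Fin n) (Fin n) ℂ) with hN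
  set δ : ℝ := -κ - μ.re with hδ
  have hδ0 : 0 < δ := by rw [hδ]; linarith
  refine ⟨∑ j ∈ Finset.range k, (δ ^ j)⁻¹ * ‖(N ^ j).mulVec w‖, fun t ht => ?_⟩
  rw [aux_exp_shift A μ t, Matrix.smul_mulVec, aux_exp_nilp N w k h t, norm_smul,
    Complex.norm_exp]
  have hre : ((t : ℂ) * μ).re = -κ * t - δ * t := by
    simp [hδ]; ring
  rw [hre]
  have hs : ‖∑ j ∈ Finset.range k, ((t : ℂ) ^ j / (j.factorial : ℂ)) • (N ^ j).mulVec w‖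
      ≤ (∑ j ∈ Finset.range k, (δ ^ j)⁻¹ * ‖(N ^ j).mulVec w‖) * Real.exp (δ * t) := by
    rw [Finset.sum_mul]
    refine (norm_sum_le _ _).trans (Finset.sum_le_sum fun j _ => ?_)
    rw [norm_smul]
    have h1 : ‖(t : ℂ) ^ j / (j.factorial : ℂ)‖ = t ^ j / j.factorial := by
      rw [norm_div, norm_pow, Complex.norm_natCast, Complex.norm_real, Real.norm_of_nonneg ht]
    have h2 := Real.pow_div_factorial_le_exp (δ * t) (by positivity) j
    have h3 : t ^ j / j.factorial ≤ (δ ^ j)⁻¹ * Real.exp (δ * t) := by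
      rw [inv_mul_eq_div, le_div_iff₀ (by positivity)]
      refine le_trans (le_of_eq ?_) h2
      rw [mul_pow]; ring
    rw [h1]
    calc _ ≤ (δ ^ j)⁻¹ * Real.exp (δ * t) * ‖(N ^ j).mulVec w‖ := by gcongr
      _ = _ := by ring
  calc _ ≤ Real.exp (-κ * t - δ * t) *
      ((∑ j ∈ Finset.range k, (δ ^ j)⁻¹ * ‖(N ^ j).mulVec w‖) * Real.exp (δ * t)) := by gcongr
    _ = _ := by
      rw [mul_comm, mul_assoc, ← Real.exp_add]; congr 2; ring

/-- vectors with exponential decay -/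
def decaySub {n : ℕ} (A : Matrix (Fin n) (Fin n) ℂ) (κ : ℝ) : Submodule ℂ (Fin n → ℂ) where
  carrier := {w | ∃ C : ℝ, ∀ t : ℝ, 0 ≤ t →
      ‖(NormedSpace.exp ((t : ℂ) • A)).mulVec w‖ ≤ C * Real.exp (-κ * t)}
  zero_mem' := ⟨0, fun t _ => by simp⟩
  add_mem' := by
    rintro a b ⟨C, hC⟩ ⟨D, hD⟩
    refine ⟨C + D, fun t ht => ?_⟩
    rw [Matrix.mulVec_add, add_mul]
    exact (norm_add_le _ _).trans (add_le_add (hC t ht) (hD t ht))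
  smul_mem' := by
    rintro c a ⟨C, hC⟩
    refine ⟨‖c‖ * C, fun t ht => ?_⟩
    rw [Matrix.mulVec_smul, norm_smul, mul_assoc]
    exact mul_le_mul_of_nonneg_left (hC t ht) (norm_nonneg _)

/-- complexified inclusion of `E` -/
noncomputable def cIncl {n : ℕ} (E : Submodule ℝ (EuclideanSpace ℝ (Fin n))) :
    TensorProduct ℝ ℂ E →ₗ[ℂ] (Fin n → ℂ) :=
  TensorProduct.AlgebraTensorModule.lift
    (LinearMap.toSpanSingleton ℂ _
      ({ toFun := fun x i => ((x : EuclideanSpace ℝ (Fin n)) i : ℂ)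
         map_add' := fun x y => by ext i; simp
         map_smul' := fun c x => by ext i; simp } : E →ₗ[ℝ] (Fin n → ℂ)))

theorem cIncl_tmul {n : ℕ} (E : Submodule ℝ (EuclideanSpace ℝ (Fin n))) (z : ℂ) (x : E) :
    cIncl E (z ⊗ₜ[ℝ] x) = z • fun i => ((x : EuclideanSpace ℝ (Fin n)) i : ℂ) := by
  ext i; simp [cIncl]

theorem map_mulVec_ofReal {n : ℕ} (M : Matrix (Fin n) (Fin n) ℝ)
    (x : EuclideanSpace ℝ (Fin n)) :
    (M.map Complex.ofReal).mulVec (fun i => (x i : ℂ))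
      = fun i => ((Matrix.toEuclideanLin M x) i : ℂ) := by
  ext i; simp [Matrix.mulVec, dotProduct, Matrix.toLpLin_apply]

theorem cIncl_comm {n : ℕ} (A : Matrix (Fin n) (Fin n) ℝ)
    (E : Submodule ℝ (EuclideanSpace ℝ (Fin n)))
    (hInv : ∀ x ∈ E, Matrix.toEuclideanLin A x ∈ E) (v : TensorProduct ℝ ℂ E) :
    cIncl E (LinearMap.baseChange ℂ ((Matrix.toEuclideanLin A).restrict hInv) v)
      = (A.map Complex.ofReal).mulVec (cIncl E v) := by
  induction v using TensorProduct.induction_on with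
  | zero => simp
  | add a b ha hb => simp only [map_add, ha, hb, Matrix.mulVec_add]
  | tmul z x =>
    rw [LinearMap.baseChange_tmul, cIncl_tmul, cIncl_tmul, Matrix.mulVec_smul, map_mulVec_ofReal]
    rfl

theorem cIncl_pow {n : ℕ} (A : Matrix (Fin n) (Fin n) ℝ)
    (E : Submodule ℝ (EuclideanSpace ℝ (Fin n)))
    (hInv : ∀ x ∈ E, Matrix.toEuclideanLin A x ∈ E) (μ : ℂ) (k : ℕ) (v : TensorProduct ℝ ℂ E) :
    cIncl E (((LinearMap.baseChange ℂ ((Matrix.toEuclideanLin A).restrict hInv)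
        - μ • (1 : Module.End ℂ (TensorProduct ℝ ℂ E))) ^ k) v)
      = ((A.map Complex.ofReal - μ • (1 : Matrix (Fin n) (Fin n) ℂ)) ^ k).mulVec (cIncl E v) := by
  induction k generalizing v with
  | zero => simp
  | succ k ih =>
    rw [pow_succ, pow_succ, Module.End.mul_apply, ih, ← Matrix.mulVec_mulVec]
    congr 1
    rw [LinearMap.sub_apply, map_sub, cIncl_comm, Matrix.sub_mulVec]
    simp [Matrix.smul_mulVec]

theorem cIncl_mem {n : ℕ} (A : Matrix (Fin n) (Fin n) ℝ)
    (E : Submodule ℝ (EuclideanSpace ℝ (Fin n)))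
    (hInv : ∀ x ∈ E, Matrix.toEuclideanLin A x ∈ E)
    (κ : ℝ)
    (hspec : ∀ μ ∈ spectrum ℂ
      (LinearMap.baseChange ℂ ((Matrix.toEuclideanLin A).restrict hInv)), μ.re < -κ)
    (v : TensorProduct ℝ ℂ E) : cIncl E v ∈ decaySub (A.map Complex.ofReal) κ := by
  set B := LinearMap.baseChange ℂ ((Matrix.toEuclideanLin A).restrict hInv) with hB
  have key : (⊤ : Submodule ℂ (TensorProduct ℝ ℂ E))
      ≤ (decaySub (A.map Complex.ofReal) κ).comap (cIncl E) := by
    rw [← Module.End.iSup_maxGenEigenspace_eq_top B]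
    refine iSup_le fun μ u hu => ?_
    rw [Module.End.mem_maxGenEigenspace] at hu
    obtain ⟨k, hk⟩ := hu
    rw [Submodule.mem_comap]
    by_cases hμ : μ ∈ spectrum ℂ B
    · refine aux_decay _ κ μ (hspec μ hμ) _ k ?_
      rw [← cIncl_pow A E hInv μ k u, ← hB, hk, map_zero]
    · have hun : IsUnit (B - μ • (1 : Module.End ℂ (TensorProduct ℝ ℂ E))) := by
        rw [spectrum.notMem_iff, Algebra.algebraMap_eq_smul_one] at hμ
        rw [← neg_sub]; exact hμ.neg
      have hinj := ((Module.End.isUnit_iff _).1 (hun.pow k)).injective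
      have : u = 0 := hinj (by rw [hk, map_zero])
      rw [this, map_zero]; exact zero_mem _
  exact key (Submodule.mem_top : v ∈ ⊤)

theorem stmt_4 {n : ℕ} (A : Matrix (Fin n) (Fin n) ℝ)
    (E : Submodule ℝ (EuclideanSpace ℝ (Fin n)))
    (hInv : ∀ x ∈ E, Matrix.toEuclideanLin A x ∈ E)
    (κ : ℝ) (hκ : 0 < κ)
    (hspec : ∀ μ ∈ spectrum ℂ
      (LinearMap.baseChange ℂ ((Matrix.toEuclideanLin A).restrict hInv)), μ.re < -κ) :
    ∃ K : ℝ, 1 ≤ K ∧ ∀ x ∈ E, ∀ t : ℝ, 0 ≤ t →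
      ‖expAct A t x‖ ≤ K * Real.exp (-κ * t) * ‖x‖ := by
  have hpt : ∀ x : E, ∃ C : ℝ, ∀ t : ℝ, 0 ≤ t →
      ‖expAct A t x‖ ≤ C * Real.exp (-κ * t) := by
    intro x
    obtain ⟨C, hC⟩ := cIncl_mem A E hInv κ hspec (1 ⊗ₜ[ℝ] x)
    refine ⟨Real.sqrt n * C, fun t ht => ?_⟩
    have h := hC t ht
    rw [cIncl_tmul, one_smul, aux_exp_map, map_mulVec_ofReal] at h
    have h0 : 0 ≤ C * Real.exp (-κ * t) := (norm_nonneg _).trans h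
    rw [mul_assoc, EuclideanSpace.norm_eq]
    have hb : ∀ i, ‖expAct A t x i‖ ≤ C * Real.exp (-κ * t) := by
      intro i
      have := (norm_le_pi_norm _ i).trans h
      rwa [Complex.norm_real] at this
    calc Real.sqrt (∑ i, ‖expAct A t x i‖ ^ 2)
        ≤ Real.sqrt (∑ i : Fin n, (C * Real.exp (-κ * t)) ^ 2) := by
          gcongr with i; exact hb i
      _ = _ := by
          rw [Finset.sum_const, Finset.card_univ, Fintype.card_fin, nsmul_eq_mul,
            Real.sqrt_mul (Nat.cast_nonneg n), Real.sqrt_sq h0]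
  let g : {t : ℝ // 0 ≤ t} → (E →L[ℝ] EuclideanSpace ℝ (Fin n)) := fun t =>
    Real.exp (κ * t) • LinearMap.toContinuousLinearMap
      ((Matrix.toEuclideanLin (NormedSpace.exp ((t : ℝ) • A))).comp E.subtype)
  have hg : ∀ t x, ‖g t x‖ = Real.exp (κ * t) * ‖expAct A t x‖ := by
    intro t x
    show ‖Real.exp (κ * t) • expAct A t x‖ = _
    rw [norm_smul, Real.norm_of_nonneg (Real.exp_pos _).le]
  obtain ⟨C, hC⟩ := banach_steinhaus (g := g) (fun x => by
    obtain ⟨C, hC⟩ := hpt x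
    refine ⟨C, fun t => ?_⟩
    rw [hg]
    calc _ ≤ Real.exp (κ * t) * (C * Real.exp (-κ * t)) := by
          gcongr; exact hC t t.2
      _ = C * (Real.exp (κ * t) * Real.exp (-κ * t)) := by ring
      _ = C := by rw [← Real.exp_add]; simp)
  refine ⟨max 1 C, le_max_left _ _, fun x hx t ht => ?_⟩
  have h1 := (g ⟨t, ht⟩).le_of_opNorm_le (hC ⟨t, ht⟩) ⟨x, hx⟩
  rw [hg] at h1
  have h2 : Real.exp (κ * t) * ‖expAct A t x‖ ≤ max 1 C * ‖x‖ :=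
    h1.trans (mul_le_mul_of_nonneg_right (le_max_right _ _) (norm_nonneg _))
  have h3 : Real.exp (-κ * t) * Real.exp (κ * t) = 1 := by rw [← Real.exp_add]; simp
  calc ‖expAct A t x‖ = Real.exp (-κ * t) * (Real.exp (κ * t) * ‖expAct A t x‖) := by
        rw [← mul_assoc, h3, one_mul]
    _ ≤ Real.exp (-κ * t) * (max 1 C * ‖x‖) := by gcongr
    _ = _ := by ring
end

section
/- Assume that ξ₁(t) := ∂_ε x(t,ε)|_{ε=0} is bounded on ℝ. Then ξ₁ satisfies the inhomogeneous linear ODE ξ̇₁(t) = A ξ₁(t) + f̃₁(0,t) for all t ∈ ℝ, and consequently ξ₁(t) = ∫_{−∞}^{t} e^{A(t−τ)} f̃₁(0,τ) dτ for all t ∈ ℝ, the improper integral being convergent. -/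
open MeasureTheory

open Filter Topology

attribute [local instance] Matrix.linftyOpNormedRing Matrix.linftyOpNormedAlgebra in
lemma aux_pow {n : ℕ} (B : Matrix (Fin n) (Fin n) ℂ) (h : ∀ μ ∈ spectrum ℂ B, ‖μ‖ < 1) :
    Tendsto (fun k : ℕ => B ^ k) atTop (𝓝 0) := by
  rcases n with _ | n
  · have : (fun k : ℕ => B ^ k) = fun _ => 0 := by
      funext k; exact Subsingleton.elim _ _
    rw [this]; exact tendsto_const_nhds
  have : CompleteSpace (Matrix (Fin (n+1)) (Fin (n+1)) ℂ) := FiniteDimensional.complete ℂ _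
  have h1 : spectralRadius ℂ B < (1 : NNReal) := 
    spectrum.spectralRadius_lt_of_forall_lt B (r := 1) (fun k hk => by
      have := h k hk
      exact_mod_cast this)
  obtain ⟨r, hr1, hr2⟩ := ENNReal.lt_iff_exists_nnreal_btwn.1 h1
  have hG := spectrum.pow_nnnorm_pow_one_div_tendsto_nhds_spectralRadius B
  have hev := hG.eventually_lt_const hr1
  have hr2' : (r : ℝ) < 1 := by exact_mod_cast hr2
  refine tendsto_zero_iff_norm_tendsto_zero.2 ?_
  refine squeeze_zero' (Eventually.of_forall fun _ => norm_nonneg _) ?_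
    (tendsto_pow_atTop_nhds_zero_of_lt_one r.2 hr2')
  filter_upwards [hev, eventually_gt_atTop 0] with k hk hk0
  have h2 : ((‖B ^ k‖₊ : ENNReal) ^ (1 / (k : ℝ))) ^ (k : ℝ) ≤ (r : ENNReal) ^ (k : ℝ) :=
    ENNReal.rpow_le_rpow hk.le (by positivity)
  rw [← ENNReal.rpow_mul, one_div, inv_mul_cancel₀ (by positivity), ENNReal.rpow_one,
    ENNReal.rpow_natCast] at h2
  exact_mod_cast h2

attribute [local instance] Matrix.linftyOpNormedRing Matrix.linftyOpNormedAlgebra in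
lemma aux_exp_vec {n : ℕ} (A : Matrix (Fin n) (Fin n) ℂ) (μ : ℂ) (v : Fin n → ℂ)
    (h : A.mulVec v = μ • v) : (NormedSpace.exp A).mulVec v = Complex.exp μ • v := by
  have : CompleteSpace (Matrix (Fin n) (Fin n) ℂ) := FiniteDimensional.complete ℂ _
  have h1 := NormedSpace.exp_series_hasSum_exp' (𝕂 := ℂ) A
  have h2 := NormedSpace.exp_series_hasSum_exp' (𝕂 := ℂ) μ
  let φ : Matrix (Fin n) (Fin n) ℂ →ₗ[ℂ] (Fin n → ℂ) := 
    (Matrix.mulVecBilin ℂ ℂ).flip v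
  have hφ : Continuous φ := φ.continuous_of_finiteDimensional
  have h3 := h1.map φ hφ
  have h4 : HasSum (fun k : ℕ => ((k.factorial : ℂ)⁻¹ • μ ^ k) • v) (NormedSpace.exp μ • v) :=
    h2.smul_const v
  rw [Complex.exp_eq_exp_ℂ]
  refine h3.unique ?_
  convert h4 using 2 with k
  have : ∀ k : ℕ, (A ^ k).mulVec v = μ ^ k • v := by
    intro k
    induction k with
    | zero => simp
    | succ k ih => rw [pow_succ, ← Matrix.mulVec_mulVec, h, Matrix.mulVec_smul, ih, smul_smul, pow_succ']
  change ((k.factorial : ℂ)⁻¹ • A ^ k).mulVec v = _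
  rw [Matrix.smul_mulVec, this, smul_assoc]

lemma aux_spec {n : ℕ} (A : Matrix (Fin n) (Fin n) ℂ) (h : ∀ μ ∈ spectrum ℂ A, μ.re < 0) :
    ∀ μ ∈ spectrum ℂ (NormedSpace.exp A), ‖μ‖ < 1 := by
  intro l hl
  rw [← Matrix.spectrum_toLin', ← Module.End.hasEigenvalue_iff_mem_spectrum] at hl
  set B := NormedSpace.exp A with hB
  have hc : Commute A B := (Commute.refl A).exp_right
  set E := Module.End.eigenspace (Matrix.toLin' B) l with hE
  have hEn : Nontrivial E := Submodule.nontrivial_iff_ne_bot.2 hl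
  have hmap : ∀ v ∈ E, Matrix.toLin' A v ∈ E := by
    intro v hv
    rw [hE, Module.End.mem_eigenspace_iff] at hv ⊢
    simp only [Matrix.toLin'_apply] at hv ⊢
    rw [Matrix.mulVec_mulVec, ← hc.eq, ← Matrix.mulVec_mulVec, hv, Matrix.mulVec_smul]
  obtain ⟨μ, hμ⟩ := Module.End.exists_eigenvalue ((Matrix.toLin' A).restrict hmap)
  obtain ⟨v, hv⟩ := hμ.exists_hasEigenvector
  have hv1 : A.mulVec v.1 = μ • v.1 := by
    have := congrArg Subtype.val hv.apply_eq_smul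
    simpa using this
  have hv0 : v.1 ≠ 0 := fun h0 => hv.2 (Subtype.ext h0)
  have hμs : μ ∈ spectrum ℂ A := by
    rw [← Matrix.spectrum_toLin', ← Module.End.hasEigenvalue_iff_mem_spectrum]
    exact Module.End.hasEigenvalue_of_hasEigenvector (x := v.1)
      ⟨Module.End.mem_eigenspace_iff.2 (by simpa using hv1), hv0⟩
  have e1 := aux_exp_vec A μ v.1 hv1
  have e2 : B.mulVec v.1 = l • v.1 := by
    have := Module.End.mem_eigenspace_iff.1 v.2
    simpa using this
  have : l = Complex.exp μ := smul_left_injective ℂ hv0 (by simpa using e2.symm.trans e1)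
  rw [this, Complex.norm_exp, Real.exp_lt_one_iff]
  exact h μ hμs

lemma aux_real {n : ℕ} (A : Matrix (Fin n) (Fin n) ℝ)
    (hspec : ∀ μ ∈ spectrum ℂ (A.map Complex.ofReal), μ.re < 0) :
    Tendsto (fun k : ℕ => (NormedSpace.exp A) ^ k) atTop (𝓝 0) := by
  have h := aux_pow _ (aux_spec _ hspec)
  let φ : Matrix (Fin n) (Fin n) ℝ →+* Matrix (Fin n) (Fin n) ℂ := Complex.ofRealHom.mapMatrix
  have hφc : Continuous φ := Continuous.matrix_map continuous_id Complex.continuous_ofReal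
  have he : NormedSpace.exp (A.map Complex.ofReal) = φ (NormedSpace.exp A) := by
    let := Matrix.linftyOpNormedRing (n := Fin n) (α := ℝ)
    let := Matrix.linftyOpNormedAlgebra (n := Fin n) (α := ℝ) (R := ℝ)
    let := Matrix.linftyOpNormedRing (n := Fin n) (α := ℂ)
    let := Matrix.linftyOpNormedAlgebra (n := Fin n) (α := ℂ) (R := ℂ)
    have : CompleteSpace (Matrix (Fin n) (Fin n) ℝ) := FiniteDimensional.complete ℝ _
    let : NormedAlgebra ℚ (Matrix (Fin n) (Fin n) ℝ) := NormedAlgebra.restrictScalars ℚ ℝ _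
    exact (NormedSpace.map_exp φ hφc A).symm
  have hψ : Continuous (fun M : Matrix (Fin n) (Fin n) ℂ => M.map Complex.re) :=
    Continuous.matrix_map continuous_id Complex.continuous_re
  have := (hψ.tendsto 0).comp h
  convert this using 1
  · funext k
    simp only [Function.comp, he, ← map_pow]
    ext i j; simp [φ]
  · congr 1

lemma aux_decay_s6 {R : Type*} [NormedRing R] [NormedAlgebra ℝ R] [CompleteSpace R] (a : R)
    (h : Tendsto (fun k : ℕ => (NormedSpace.exp a) ^ k) atTop (𝓝 0)) :
    ∃ C δ : ℝ, 0 < δ ∧ ∀ t : ℝ, 0 ≤ t → ‖NormedSpace.exp (t • a)‖ ≤ C * Real.exp (-δ * t) := by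
  have h' : Tendsto (fun k : ℕ => ‖(NormedSpace.exp a) ^ k‖) atTop (𝓝 0) := 
    tendsto_zero_iff_norm_tendsto_zero.1 h
  obtain ⟨k, hk, hk0⟩ := ((h'.eventually_lt_const (show (0:ℝ) < Real.exp (-1) by positivity)).and
    (eventually_gt_atTop 0)).exists
  have hkp : (0:ℝ) < k := by exact_mod_cast hk0
  have hcont : Continuous fun t : ℝ => ‖NormedSpace.exp (t • a)‖ := by
    have : Continuous fun t : ℝ => NormedSpace.exp (t • a) := 
      continuous_iff_continuousAt.2 fun t => (hasDerivAt_exp_smul_const a t).continuousAt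
    exact this.norm
  obtain ⟨M, hM⟩ := (isCompact_Icc (a := (0:ℝ)) (b := k)).bddAbove_image hcont.continuousOn
  have hM' : ∀ t ∈ Set.Icc (0:ℝ) k, ‖NormedSpace.exp (t • a)‖ ≤ M := fun t ht =>
    hM ⟨t, ht, rfl⟩
  have hM0 : 0 ≤ M := (norm_nonneg _).trans (hM' 0 ⟨le_rfl, hkp.le⟩)
  have hak : NormedSpace.exp ((k:ℝ) • a) = NormedSpace.exp a ^ k := by
    rw [Nat.cast_smul_eq_nsmul]
    let : NormedAlgebra ℚ R := NormedAlgebra.restrictScalars ℚ ℝ R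
    exact NormedSpace.exp_nsmul k a
  have key : ∀ m : ℕ, ∀ s ∈ Set.Icc (0:ℝ) k,
      ‖NormedSpace.exp ((s + m * k) • a)‖ ≤ M * Real.exp (-m) := by
    intro m s hs
    induction m with
    | zero => simpa using hM' s hs
    | succ m ih =>
      have e : (s + ((m+1 : ℕ):ℝ) * k) • a = (s + m * k) • a + (k:ℝ) • a := by
        rw [← add_smul]; push_cast; congr 1; ring
      have : NormedSpace.exp ((s + ((m+1 : ℕ):ℝ) * k) • a) = 
          NormedSpace.exp ((s + m * k) • a) * NormedSpace.exp a ^ k := by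
        rw [e, ← hak]
        let : NormedAlgebra ℚ R := NormedAlgebra.restrictScalars ℚ ℝ R
        exact NormedSpace.exp_add_of_commute 
          (((Commute.refl a).smul_left _).smul_right _)
      rw [this]
      calc _ ≤ _ := norm_mul_le _ _
        _ ≤ (M * Real.exp (-m)) * Real.exp (-1) := by gcongr
        _ = _ := by rw [mul_assoc, ← Real.exp_add]; congr 2; push_cast; ring
  refine ⟨M * Real.exp 1, 1 / k, by positivity, fun t ht => ?_⟩
  set m := ⌊t / k⌋₊
  have hm1 : (m:ℝ) ≤ t / k := Nat.floor_le (by positivity)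
  have hm2 : t / k < m + 1 := Nat.lt_floor_add_one _
  have hm1' : m * k ≤ t := (le_div_iff₀ hkp).1 hm1
  have hm2' : t < (m + 1) * k := (div_lt_iff₀ hkp).1 hm2
  have := key m (t - m * k) ⟨by linarith, by linarith⟩
  rw [sub_add_cancel] at this
  refine this.trans ?_
  rw [mul_assoc, ← Real.exp_add]
  gcongr
  have : -(1 / (k:ℝ)) * t = -(t / k) := by ring
  linarith

lemma aux_expd {R : Type*} [NormedRing R] [NormedAlgebra ℝ R] [CompleteSpace R] (a : R) (t τ : ℝ) :
    HasDerivAt (fun s : ℝ => NormedSpace.exp ((t - s) • a))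
      (-(NormedSpace.exp ((t - τ) • a) * a)) τ := by
  have h1 := hasDerivAt_exp_smul_const (𝕂 := ℝ) a (t - τ)
  have h2 : HasDerivAt (fun s : ℝ => t - s) (-1) τ := by
    simpa using (hasDerivAt_id τ).const_sub t
  have h3 := h1.scomp τ h2
  rw [neg_one_smul] at h3
  exact h3

lemma aux_exp0 {R : Type*} [NormedRing R] [NormedAlgebra ℝ R] [CompleteSpace R] (a : R) (t : ℝ) :
    NormedSpace.exp ((t - t) • a) = 1 := by
  rw [sub_self, zero_smul, NormedSpace.exp_zero]

lemma aux_alg {E : Type*} [NormedAddCommGroup E] [NormedSpace ℝ E] (P L : E →L[ℝ] E) (u v : E) :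
    (-(P * L)) u + P (L u + v) = P v := by
  simp

lemma aux_expAct {n : ℕ} (A : Matrix (Fin n) (Fin n) ℝ) :
    ∃ L : EuclideanSpace ℝ (Fin n) →L[ℝ] EuclideanSpace ℝ (Fin n),
      (∀ v, L v = Matrix.toEuclideanLin A v) ∧
      (∀ t v, expAct A t v = NormedSpace.exp (t • L) v) ∧
      ∀ k : ℕ, NormedSpace.exp L ^ k = Matrix.toEuclideanCLM (n := Fin n) (𝕜 := ℝ)
        (NormedSpace.exp A ^ k) := by
  have hc : Continuous (Matrix.toEuclideanCLM (n := Fin n) (𝕜 := ℝ)) :=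
    (Matrix.toEuclideanCLM (n := Fin n) (𝕜 := ℝ)).toAlgEquiv.toLinearMap.continuous_of_finiteDimensional
  have he : ∀ M : Matrix (Fin n) (Fin n) ℝ, NormedSpace.exp (Matrix.toEuclideanCLM (n := Fin n) (𝕜 := ℝ) M)
      = Matrix.toEuclideanCLM (n := Fin n) (𝕜 := ℝ) (NormedSpace.exp M) := by
    intro M
    let := Matrix.linftyOpNormedRing (n := Fin n) (α := ℝ)
    let := Matrix.linftyOpNormedAlgebra (n := Fin n) (α := ℝ) (R := ℝ)
    have : CompleteSpace (Matrix (Fin n) (Fin n) ℝ) := FiniteDimensional.complete ℝ _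
    let : NormedAlgebra ℚ (Matrix (Fin n) (Fin n) ℝ) := NormedAlgebra.restrictScalars ℚ ℝ _
    exact (NormedSpace.map_exp (Matrix.toEuclideanCLM (n := Fin n) (𝕜 := ℝ)) hc M).symm
  refine ⟨Matrix.toEuclideanCLM (n := Fin n) (𝕜 := ℝ) A, fun v => rfl, fun t v => ?_, fun k => ?_⟩
  · rw [← map_smul, he]; rfl
  · rw [he, map_pow]

lemma aux_ode_s6 {n : ℕ} (L : EuclideanSpace ℝ (Fin n) →L[ℝ] EuclideanSpace ℝ (Fin n))
    (f₀ : EuclideanSpace ℝ (Fin n) → EuclideanSpace ℝ (Fin n))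
    (hf₀ : ContDiff ℝ 1 f₀) (hDf₀0 : fderiv ℝ f₀ 0 = 0)
    (f₁ : EuclideanSpace ℝ (Fin n) → ℝ → EuclideanSpace ℝ (Fin n))
    (hf₁c : Continuous fun p : EuclideanSpace ℝ (Fin n) × ℝ => f₁ p.1 p.2)
    (ε₀ : ℝ) (hε₀ : 0 < ε₀)
    (x : ℝ → ℝ → EuclideanSpace ℝ (Fin n))
    (hxC2 : ContDiffOn ℝ 2 (fun p : ℝ × ℝ => x p.1 p.2) (Set.univ ×ˢ Set.Ico 0 ε₀))
    (hsol : ∀ ε ∈ Set.Ico (0 : ℝ) ε₀, ∀ t : ℝ, HasDerivAt (fun s => x s ε)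
      (L (x t ε) + f₀ (x t ε) + ε • f₁ (x t ε) t) t)
    (hx0 : ∀ t : ℝ, x t 0 = 0) (t : ℝ) :
    HasDerivAt (fun s => derivWithin (fun ε => x s ε) (Set.Ico 0 ε₀) 0)
      (L (derivWithin (fun ε => x t ε) (Set.Ico 0 ε₀) 0) + f₁ 0 t) t := by
  set S : Set (ℝ × ℝ) := Set.univ ×ˢ Set.Ico 0 ε₀ with hS
  set F : ℝ × ℝ → EuclideanSpace ℝ (Fin n) := fun p => x p.1 p.2 with hF
  have hU : UniqueDiffOn ℝ S := uniqueDiffOn_univ.prod (uniqueDiffOn_Ico 0 ε₀)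
  have h0 : (0:ℝ) ∈ Set.Ico 0 ε₀ := ⟨le_rfl, hε₀⟩
  have hU0 : UniqueDiffWithinAt ℝ (Set.Ico 0 ε₀) (0:ℝ) := uniqueDiffOn_Ico 0 ε₀ 0 h0
  have hmem : ∀ s, ∀ ε ∈ Set.Ico (0:ℝ) ε₀, (s, ε) ∈ S := fun s ε h => ⟨trivial, h⟩
  set D := fderivWithin ℝ F S with hD
  have hFd : ∀ p ∈ S, HasFDerivWithinAt F (D p) S p := fun p hp =>
    (hxC2.differentiableOn (by norm_num) p hp).hasFDerivWithinAt
  have hDd : HasFDerivWithinAt D (fderivWithin ℝ D S (t, 0)) S (t, 0) :=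
    ((hxC2.fderivWithin hU (m := 1) (by norm_num)).differentiableOn (by norm_num) (t, 0)
      (hmem t 0 h0)).hasFDerivWithinAt
  -- curves
  have cε : ∀ s ε : ℝ, HasDerivAt (fun e : ℝ => ((s, e) : ℝ × ℝ)) (0, 1) ε := fun s ε =>
    (hasDerivAt_const ε s).prodMk (hasDerivAt_id ε)
  have cs : ∀ s ε : ℝ, HasDerivAt (fun r : ℝ => ((r, ε) : ℝ × ℝ)) (1, 0) s := fun s ε =>
    (hasDerivAt_id s).prodMk (hasDerivAt_const s ε)
  have hξ' : ∀ s, HasDerivWithinAt (fun ε => x s ε) (D (s, 0) (0, 1)) (Set.Ico 0 ε₀) 0 := fun s =>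
    (hFd (s, 0) (hmem s 0 h0)).comp_hasDerivWithinAt (0:ℝ) (cε s 0).hasDerivWithinAt
      (fun ε hε => hmem s ε hε)
  have hξ : ∀ s, derivWithin (fun ε => x s ε) (Set.Ico 0 ε₀) 0 = D (s, 0) (0, 1) := fun s =>
    (hξ' s).derivWithin hU0
  have hR : ∀ ε ∈ Set.Ico (0:ℝ) ε₀, D (t, ε) (1, 0) = L (x t ε) + f₀ (x t ε) + ε • f₁ (x t ε) t := by
    intro ε hε
    have := (hFd (t, ε) (hmem t ε hε)).comp_hasDerivWithinAt t
      ((cs t ε).hasDerivWithinAt (s := Set.univ)) (fun s _ => hmem s ε hε)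
    rw [hasDerivWithinAt_univ] at this
    exact this.unique (hsol ε hε t)
  have hsym : IsSymmSndFDerivWithinAt ℝ F S (t, 0) := by
    refine (hxC2 (t, 0) (hmem t 0 h0)).isSymmSndFDerivWithinAt (by simp) hU ?_ (hmem t 0 h0)
    rw [hS, interior_prod_eq, closure_prod_eq, interior_Ico, closure_Ioo hε₀.ne]
    simp [hε₀.le]
  have hA : HasDerivAt (fun s => D (s, 0) (0, 1)) (fderivWithin ℝ D S (t, 0) (1, 0) (0, 1)) t := by
    have := hDd.comp_hasDerivWithinAt t
      ((cs t 0).hasDerivWithinAt (s := Set.univ)) (fun s _ => hmem s 0 h0)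
    rw [hasDerivWithinAt_univ] at this
    simpa using this.clm_apply (hasDerivAt_const t ((0, 1) : ℝ × ℝ))
  have hB : HasDerivWithinAt (fun ε => D (t, ε) (1, 0)) (fderivWithin ℝ D S (t, 0) (0, 1) (1, 0))
      (Set.Ico 0 ε₀) 0 := by
    have := hDd.comp_hasDerivWithinAt (0:ℝ)
      ((cε t 0).hasDerivWithinAt (s := Set.Ico 0 ε₀)) (fun ε hε => hmem t ε hε)
    simpa using this.clm_apply (hasDerivWithinAt_const (0:ℝ) (Set.Ico 0 ε₀) ((1, 0) : ℝ × ℝ))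
  have hC1 : HasDerivWithinAt (fun ε => L (x t ε)) (L (D (t, 0) (0, 1))) (Set.Ico 0 ε₀) 0 :=
    L.hasFDerivAt.comp_hasDerivWithinAt (0:ℝ) (hξ' t)
  have hC2 : HasDerivWithinAt (fun ε => f₀ (x t ε)) 0 (Set.Ico 0 ε₀) 0 := by
    have hd : HasFDerivAt f₀ (fderiv ℝ f₀ (x t 0)) (x t 0) :=
      (hf₀.differentiable (by norm_num) _).hasFDerivAt
    have := hd.comp_hasDerivWithinAt (0:ℝ) (hξ' t)
    rw [hx0, hDf₀0] at this
    exact this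
  have hC3 : HasDerivWithinAt (fun ε : ℝ => ε • f₁ (x t ε) t) (f₁ 0 t) (Set.Ico 0 ε₀) 0 := by
    rw [hasDerivWithinAt_iff_tendsto_slope]
    have hg : ContinuousWithinAt (fun ε : ℝ => f₁ (x t ε) t) (Set.Ico 0 ε₀) 0 :=
      hf₁c.continuousAt.comp_continuousWithinAt (f := fun ε => (x t ε, t))
        ((hξ' t).continuousWithinAt.prodMk continuousWithinAt_const)
    have hg' : Tendsto (fun ε : ℝ => f₁ (x t ε) t) (𝓝[Set.Ico 0 ε₀ \ {0}] 0) (𝓝 (f₁ 0 t)) := by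
      have := hg.tendsto.mono_left (nhdsWithin_mono 0 (Set.sdiff_subset (t := {0})))
      rwa [hx0] at this
    refine hg'.congr' ?_
    filter_upwards [self_mem_nhdsWithin] with ε hε
    have hne : ε ≠ 0 := hε.2
    simp [slope, smul_smul, hne]
  have hC : HasDerivWithinAt (fun ε => D (t, ε) (1, 0)) (L (D (t, 0) (0, 1)) + 0 + f₁ 0 t)
      (Set.Ico 0 ε₀) 0 :=
    ((hC1.add hC2).add hC3).congr (fun ε hε => hR ε hε) (hR 0 h0)
  have hfin := hU0.eq_deriv _ hB hC
  have hs2 := hsym (1, 0) (0, 1)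
  simp only [hξ]
  rw [add_zero] at hfin
  rw [← hfin, ← hs2]
  exact hA

/-- let `A` have all eigenvalues with negative real part, `f₀` be `C¹` with
`f₀(0) = 0`, `Df₀(0) = 0`, `f̃₁` continuous with `sup_t |f̃₁(0,t)| < ∞`, and let
`x : ℝ × [0,ε₀) → ℝⁿ` be a `C²` family with `x(·,ε)` solving `ẋ = Ax + f₀(x) + ε f̃₁(x,t)`
and `x(·,0) = 0`.  If `ξ₁(t) := ∂_ε x(t,ε)|_{ε=0}` is bounded on `ℝ`, then `ξ₁` solves
`ξ̇₁ = A ξ₁ + f̃₁(0,t)` and hence `ξ₁(t) = ∫_{-∞}^{t} e^{A(t−τ)} f̃₁(0,τ) dτ`, the improper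
integral being convergent. -/
theorem stmt_6 {n : ℕ} (A : Matrix (Fin n) (Fin n) ℝ)
    (hspec : ∀ μ ∈ spectrum ℂ (A.map Complex.ofReal), μ.re < 0)
    (f₀ : EuclideanSpace ℝ (Fin n) → EuclideanSpace ℝ (Fin n))
    (hf₀ : ContDiff ℝ 1 f₀) (hf₀0 : f₀ 0 = 0) (hDf₀0 : fderiv ℝ f₀ 0 = 0)
    (f₁ : EuclideanSpace ℝ (Fin n) → ℝ → EuclideanSpace ℝ (Fin n))
    (hf₁c : Continuous fun p : EuclideanSpace ℝ (Fin n) × ℝ => f₁ p.1 p.2)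
    (hf₁b : ∃ C : ℝ, ∀ t : ℝ, ‖f₁ 0 t‖ ≤ C)
    (ε₀ : ℝ) (hε₀ : 0 < ε₀)
    (x : ℝ → ℝ → EuclideanSpace ℝ (Fin n))
    (hxC2 : ContDiffOn ℝ 2 (fun p : ℝ × ℝ => x p.1 p.2) (Set.univ ×ˢ Set.Ico 0 ε₀))
    (hsol : ∀ ε ∈ Set.Ico (0 : ℝ) ε₀, ∀ t : ℝ, HasDerivAt (fun s => x s ε)
      (Matrix.toEuclideanLin A (x t ε) + f₀ (x t ε) + ε • f₁ (x t ε) t) t)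
    (hx0 : ∀ t : ℝ, x t 0 = 0)
    (hbdd : ∃ C : ℝ, ∀ t : ℝ,
      ‖derivWithin (fun ε => x t ε) (Set.Ico 0 ε₀) 0‖ ≤ C) :
    (∀ t : ℝ, HasDerivAt (fun s => derivWithin (fun ε => x s ε) (Set.Ico 0 ε₀) 0)
      (Matrix.toEuclideanLin A (derivWithin (fun ε => x t ε) (Set.Ico 0 ε₀) 0) + f₁ 0 t) t) ∧
    (∀ t : ℝ, IntegrableOn (fun τ => expAct A (t - τ) (f₁ 0 τ)) (Set.Iic t)) ∧
    (∀ t : ℝ, derivWithin (fun ε => x t ε) (Set.Ico 0 ε₀) 0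
      = ∫ τ in Set.Iic t, expAct A (t - τ) (f₁ 0 τ)) := by
  obtain ⟨L, hL, hE, hP⟩ := aux_expAct A
  simp only [← hL] at hsol ⊢
  set ξ : ℝ → EuclideanSpace ℝ (Fin n) := fun s => derivWithin (fun ε => x s ε) (Set.Ico 0 ε₀) 0
    with hξ
  have hode : ∀ t, HasDerivAt ξ (L (ξ t) + f₁ 0 t) t :=
    aux_ode_s6 L f₀ hf₀ hDf₀0 f₁ hf₁c ε₀ hε₀ x hxC2 hsol hx0
  have hpow : Tendsto (fun k : ℕ => NormedSpace.exp L ^ k) atTop (𝓝 0) := by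
    have hc : Continuous (Matrix.toEuclideanCLM (n := Fin n) (𝕜 := ℝ)) :=
      (Matrix.toEuclideanCLM (n := Fin n)
        (𝕜 := ℝ)).toAlgEquiv.toLinearMap.continuous_of_finiteDimensional
    have := (hc.tendsto 0).comp (aux_real A hspec)
    rw [map_zero] at this
    refine this.congr fun k => (hP k).symm
  obtain ⟨C, δ, hδ, hC⟩ := aux_decay_s6 L hpow
  obtain ⟨K, hK⟩ := hf₁b
  obtain ⟨N, hN⟩ := hbdd
  have hC0 : 0 ≤ C := by
    have := (norm_nonneg _).trans (hC 0 le_rfl)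
    simpa using this
  have hexpd : ∀ t τ : ℝ, HasDerivAt (fun s : ℝ => NormedSpace.exp ((t - s) • L))
      (-(NormedSpace.exp ((t - τ) • L) * L)) τ := by
    intro t τ
    exact aux_expd L t τ
  have hbd : ∀ t τ : ℝ, τ ≤ t → ∀ (v : EuclideanSpace ℝ (Fin n)) (M : ℝ), ‖v‖ ≤ M →
      ‖NormedSpace.exp ((t - τ) • L) v‖ ≤ C * Real.exp (-δ * t) * M * Real.exp (δ * τ) := by
    intro t τ hτ v M hv
    calc _ ≤ ‖NormedSpace.exp ((t - τ) • L)‖ * ‖v‖ := ContinuousLinearMap.le_opNorm _ _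
      _ ≤ (C * Real.exp (-δ * (t - τ))) * M := by
        gcongr
        exact hC _ (by linarith)
      _ = _ := by
        rw [show -δ * (t - τ) = -δ * t + δ * τ by ring, Real.exp_add]; ring
  have hf1c : Continuous (fun τ => f₁ 0 τ) := hf₁c.comp (by fun_prop : Continuous fun τ : ℝ =>
    ((0 : EuclideanSpace ℝ (Fin n)), τ))
  have hint : ∀ t : ℝ, IntegrableOn (fun τ => expAct A (t - τ) (f₁ 0 τ)) (Set.Iic t) := by
    intro t
    simp only [hE]
    have hcont : Continuous (fun τ => NormedSpace.exp ((t - τ) • L) (f₁ 0 τ)) :=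
      (continuous_iff_continuousAt.2 fun τ => (hexpd t τ).continuousAt).clm_apply hf1c
    refine Integrable.mono' ((integrableOn_exp_mul_Iic hδ t).const_mul
      (C * Real.exp (-δ * t) * K)) hcont.aestronglyMeasurable ?_
    filter_upwards [ae_restrict_mem measurableSet_Iic] with τ hτ
    exact hbd t τ hτ _ _ (hK τ)
  refine ⟨hode, hint, fun t => ?_⟩
  have hG : ∀ τ ∈ Set.Iic t, HasDerivAt (fun s => NormedSpace.exp ((t - s) • L) (ξ s))
      (expAct A (t - τ) (f₁ 0 τ)) τ := by
    intro τ _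
    have := (hexpd t τ).clm_apply (hode τ)
    rw [hE]
    have e : (-(NormedSpace.exp ((t - τ) • L) * L)) (ξ τ)
        + (NormedSpace.exp ((t - τ) • L)) (L (ξ τ) + f₁ 0 τ)
        = NormedSpace.exp ((t - τ) • L) (f₁ 0 τ) := aux_alg _ L _ _
    rw [e] at this
    exact this
  have hlim : Tendsto (fun s => NormedSpace.exp ((t - s) • L) (ξ s)) atBot (𝓝 0) := by
    refine squeeze_zero_norm' (a := fun s => C * Real.exp (-δ * t) * N * Real.exp (δ * s)) ?_ ?_
    · filter_upwards [Iic_mem_atBot t] with s hs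
      exact hbd t s hs _ _ (hN s)
    · have : Tendsto (fun s : ℝ => Real.exp (δ * s)) atBot (𝓝 0) :=
        Real.tendsto_exp_atBot.comp (tendsto_id.const_mul_atBot hδ)
      simpa using this.const_mul (C * Real.exp (-δ * t) * N)
  rw [integral_Iic_of_hasDerivAt_of_tendsto' hG (hint t) hlim]
  have e : NormedSpace.exp ((t - t) • L) = 1 := aux_exp0 L t
  rw [e, sub_zero]
  rfl
end

section
/- Assume in addition that f₀ is C², that f̃₁ is C¹ in x with sup_{t∈ℝ} ‖D_x f̃₁(0,t)‖ < ∞, that x is C³ in (t,ε), and that ξ₂(t) := (1/2) ∂²_ε x(t,ε)|_{ε=0} is bounded on ℝ. Then ξ₂(t) = ∫_{−∞}^{t} e^{A(t−τ)} [ (1/2) D²f₀(0)(ξ₁(τ), ξ₁(τ)) + D_x f̃₁(0,τ) ξ₁(τ) ] dτ for all t ∈ ℝ, where ξ₁(t) = ∫_{−∞}^{t} e^{A(t−τ)} f̃₁(0,τ) dτ and D²f₀(0) denotes the second derivative of f₀ at 0 viewed as a symmetric bilinear map. -/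
open MeasureTheory

section decay
open scoped Matrix.Norms.Operator

lemma exp_nilp_mulVec {n : ℕ} (N : Matrix (Fin n) (Fin n) ℂ) (v : Fin n → ℂ) (k : ℕ)
    (h : (N ^ k).mulVec v = 0) (t : ℂ) :
    (NormedSpace.exp (t • N)).mulVec v =
      ∑ j ∈ Finset.range k, ((j.factorial : ℂ)⁻¹ * t ^ j) • (N ^ j).mulVec v := by
  have h1 := NormedSpace.exp_series_hasSum_exp' (𝕂 := ℂ) (t • N)
  have hc : Continuous (fun M : Matrix (Fin n) (Fin n) ℂ => M.mulVec v) :=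
    Continuous.matrix_mulVec continuous_id continuous_const
  have h2 := h1.map (Matrix.mulVecBilin ℂ ℂ |>.flip v) hc
  refine h2.unique ?_
  have h3 : ∀ j ∉ Finset.range k,
      ((j.factorial : ℂ)⁻¹ * t ^ j) • (N ^ j).mulVec v = 0 := by
    intro j hj
    have : k ≤ j := by simpa using hj
    rw [← Nat.sub_add_cancel this, pow_add N, ← Matrix.mulVec_mulVec, h]
    simp
  have h4 : HasSum (fun j : ℕ => ((j.factorial : ℂ)⁻¹ * t ^ j) • (N ^ j).mulVec v) _ :=
    hasSum_sum_of_ne_finset_zero h3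
  convert h4 using 1
  funext j
  simp [smul_pow, mul_smul]

def Dec {n : ℕ} (B : Matrix (Fin n) (Fin n) ℂ) (v : Fin n → ℂ) : Prop :=
  ∃ C c : ℝ, 0 ≤ C ∧ 0 < c ∧ ∀ t : ℝ, 0 ≤ t →
    ‖(NormedSpace.exp ((t : ℂ) • B)).mulVec v‖ ≤ C * Real.exp (-c * t)

lemma dec_zero {n : ℕ} (B : Matrix (Fin n) (Fin n) ℂ) : Dec B 0 :=
  ⟨0, 1, le_rfl, one_pos, by simp⟩

lemma dec_add {n : ℕ} (B : Matrix (Fin n) (Fin n) ℂ) (v w : Fin n → ℂ)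
    (hv : Dec B v) (hw : Dec B w) : Dec B (v + w) := by
  obtain ⟨C, c, hC, hc, h⟩ := hv
  obtain ⟨D, d, hD, hd, h'⟩ := hw
  refine ⟨C + D, min c d, by positivity, lt_min hc hd, fun t ht => ?_⟩
  rw [Matrix.mulVec_add]
  refine (norm_add_le _ _).trans ?_
  rw [add_mul]
  refine add_le_add ((h t ht).trans ?_) ((h' t ht).trans ?_)
  · gcongr; exact min_le_left _ _
  · gcongr; exact min_le_right _ _

lemma dec_gen {n : ℕ} (B : Matrix (Fin n) (Fin n) ℂ) (μ : ℂ) (hμ : μ.re < 0)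
    (v : Fin n → ℂ) (k : ℕ) (h : ((B - μ • 1) ^ k).mulVec v = 0) : Dec B v := by
  set N := B - μ • (1 : Matrix (Fin n) (Fin n) ℂ) with hN
  set δ : ℝ := -μ.re / 2 with hδ
  have hδ0 : 0 < δ := by rw [hδ]; linarith
  refine ⟨∑ j ∈ Finset.range k, (δ ^ j)⁻¹ * ‖(N ^ j).mulVec v‖, δ, by positivity, hδ0,
    fun t ht => ?_⟩
  have e1 : (t : ℂ) • B = algebraMap ℂ (Matrix (Fin n) (Fin n) ℂ) (t * μ) + (t : ℂ) • N := by
    rw [hN, Algebra.algebraMap_eq_smul_one, smul_sub, smul_smul]; abel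
  have e2 : NormedSpace.exp ((t : ℂ) • B) = Complex.exp (t * μ) • NormedSpace.exp ((t : ℂ) • N) := by
    have e0 : NormedSpace.exp (algebraMap ℂ (Matrix (Fin n) (Fin n) ℂ) (t * μ)) =
        algebraMap ℂ (Matrix (Fin n) (Fin n) ℂ) (NormedSpace.exp (t * μ)) :=
      (NormedSpace.algebraMap_exp_comm (𝕂 := ℂ) (𝔸 := Matrix (Fin n) (Fin n) ℂ) (t * μ)).symm
    rw [e1, Matrix.exp_add_of_commute _ _ (Algebra.commute_algebraMap_left _ _), e0,
      Algebra.algebraMap_eq_smul_one, smul_mul_assoc, one_mul, Complex.exp_eq_exp_ℂ]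
  rw [e2, Matrix.smul_mulVec, exp_nilp_mulVec N v k h, norm_smul, Complex.norm_exp]
  have e3 : ((t : ℂ) * μ).re = -δ * t + -δ * t := by simp [hδ]; ring
  rw [e3, Real.exp_add]
  have e4 : ‖∑ j ∈ Finset.range k, ((j.factorial : ℂ)⁻¹ * (t : ℂ) ^ j) • (N ^ j).mulVec v‖ ≤
      Real.exp (δ * t) * ∑ j ∈ Finset.range k, (δ ^ j)⁻¹ * ‖(N ^ j).mulVec v‖ := by
    refine (norm_sum_le _ _).trans ?_
    rw [Finset.mul_sum]
    refine Finset.sum_le_sum fun j _ => ?_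
    rw [norm_smul, ← mul_assoc]
    gcongr
    have := Real.pow_div_factorial_le_exp (δ * t) (by positivity) j
    rw [norm_mul, norm_inv, norm_pow, Complex.norm_real, Complex.norm_natCast, Real.norm_of_nonneg ht]
    rw [← div_eq_mul_inv, le_div_iff₀ (by positivity)]
    calc _ = (δ * t) ^ j / j.factorial := by rw [mul_pow]; field_simp
      _ ≤ _ := this
  calc _ ≤ Real.exp (-δ * t) * Real.exp (-δ * t) * (Real.exp (δ * t) * ∑ j ∈ Finset.range k, (δ ^ j)⁻¹ * ‖(N ^ j).mulVec v‖) := by gcongr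
    _ = (Real.exp (-δ * t) * Real.exp (δ * t)) * ((∑ j ∈ Finset.range k, (δ ^ j)⁻¹ * ‖(N ^ j).mulVec v‖) * Real.exp (-δ * t)) := by ring
    _ = _ := by rw [← Real.exp_add]; simp

lemma dec_all {n : ℕ} (B : Matrix (Fin n) (Fin n) ℂ)
    (hspec : ∀ μ ∈ spectrum ℂ B, μ.re < 0) (v : Fin n → ℂ) : Dec B v := by
  have htop := Module.End.iSup_maxGenEigenspace_eq_top (Matrix.toLin' B)
  have hv : v ∈ ⨆ μ, Module.End.maxGenEigenspace (Matrix.toLin' B) μ := by rw [htop]; trivial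
  refine Submodule.iSup_induction _ (motive := Dec B) hv ?_ (dec_zero B) (dec_add B)
  intro μ w hw
  rw [Module.End.mem_maxGenEigenspace] at hw
  obtain ⟨k, hk⟩ := hw
  have hk' : ((B - μ • 1) ^ k).mulVec w = 0 := by
    rw [← Matrix.toLin'_apply, Matrix.toLin'_pow, map_sub, map_smul, Matrix.toLin'_one]
    exact hk
  by_cases hμ : μ ∈ spectrum ℂ B
  · exact dec_gen B μ (hspec μ hμ) w k hk'
  · have hu : IsUnit (B - μ • (1 : Matrix (Fin n) (Fin n) ℂ)) := by
      rw [spectrum.mem_iff, not_not, Algebra.algebraMap_eq_smul_one] at hμ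
      simpa using hμ.neg
    have := Matrix.mulVec_injective_iff_isUnit.mpr (hu.pow k)
    have hw0 : w = 0 := this (by simpa using hk')
    rw [hw0]; exact dec_zero B

lemma map_exp_ofReal {n : ℕ} (A : Matrix (Fin n) (Fin n) ℝ) (t : ℝ) :
    (NormedSpace.exp (t • A)).map Complex.ofReal =
      NormedSpace.exp ((t : ℂ) • A.map Complex.ofReal) := by
  have := NormedSpace.map_exp (Complex.ofRealHom.mapMatrix (m := Fin n))
    (by exact Continuous.matrix_map continuous_id Complex.continuous_ofReal) (t • A)
  have h2 : (t • A).map Complex.ofReal = (t : ℂ) • A.map Complex.ofReal := by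
    ext i j; simp
  rw [← h2]
  exact this

lemma expAct_eq {n : ℕ} (A : Matrix (Fin n) (Fin n) ℝ) (t : ℝ) (v : EuclideanSpace ℝ (Fin n)) :
    expAct A t v = NormedSpace.exp (t • (Matrix.toEuclideanCLM (𝕜 := ℝ) A)) v := by
  have hc : Continuous (Matrix.toEuclideanCLM (𝕜 := ℝ) (n := Fin n)) :=
    LinearMap.continuous_of_finiteDimensional
      (Matrix.toEuclideanCLM (𝕜 := ℝ) (n := Fin n)).toAlgEquiv.toLinearMap
  have := NormedSpace.map_exp (Matrix.toEuclideanCLM (𝕜 := ℝ) (n := Fin n)) hc (t • A)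
  rw [map_smul] at this
  rw [← this]
  rfl

lemma expAct_decay_vec {n : ℕ} (A : Matrix (Fin n) (Fin n) ℝ)
    (hspec : ∀ μ ∈ spectrum ℂ (A.map Complex.ofReal), μ.re < 0)
    (v : EuclideanSpace ℝ (Fin n)) :
    ∃ C c : ℝ, 0 ≤ C ∧ 0 < c ∧ ∀ t : ℝ, 0 ≤ t → ‖expAct A t v‖ ≤ C * Real.exp (-c * t) := by
  obtain ⟨C, c, hC, hc, h⟩ := dec_all _ hspec (fun i => (v i : ℂ))
  refine ⟨n * C, c, by positivity, hc, fun t ht => ?_⟩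
  have hcoord : ∀ i, ‖expAct A t v i‖ ≤ C * Real.exp (-c * t) := by
    intro i
    refine le_trans (le_of_eq ?_) ((norm_le_pi_norm _ i).trans (h t ht))
    rw [← map_exp_ofReal, ← Complex.norm_real]
    congr 1
    simp [expAct, Matrix.toEuclideanLin, Matrix.mulVec, dotProduct]
  have : expAct A t v = ∑ i, (expAct A t v i) • EuclideanSpace.single i (1 : ℝ) := by
    ext j
    simp [Pi.single_apply]
  rw [this]
  refine (norm_sum_le _ _).trans ?_
  calc _ ≤ ∑ i : Fin n, C * Real.exp (-c * t) := by
        refine Finset.sum_le_sum fun i _ => ?_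
        rw [norm_smul]; simpa using hcoord i
    _ = _ := by simp; ring

lemma expAct_decay {n : ℕ} (A : Matrix (Fin n) (Fin n) ℝ)
    (hspec : ∀ μ ∈ spectrum ℂ (A.map Complex.ofReal), μ.re < 0) :
    ∃ C c : ℝ, 0 ≤ C ∧ 0 < c ∧ ∀ t : ℝ, 0 ≤ t → ∀ v, ‖expAct A t v‖ ≤ C * Real.exp (-c * t) * ‖v‖ := by
  choose C c hC hc h using fun i : Fin n => expAct_decay_vec A hspec (EuclideanSpace.single i 1)
  obtain ⟨d, hd, hdc⟩ : ∃ d : ℝ, 0 < d ∧ ∀ i, d ≤ c i := by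
    rcases isEmpty_or_nonempty (Fin n) with _ | _
    · exact ⟨1, one_pos, fun i => isEmptyElim i⟩
    · obtain ⟨i, hi⟩ := Finite.exists_min c
      exact ⟨c i, hc i, hi⟩
  refine ⟨∑ i, C i, d, Finset.sum_nonneg fun i _ => hC i, hd, fun t ht v => ?_⟩
  have : expAct A t v = ∑ i, v i • expAct A t (EuclideanSpace.single i 1) := by
    have hv : v = ∑ i, v i • EuclideanSpace.single i (1 : ℝ) := by
      ext j; simp [Pi.single_apply]
    conv_lhs => rw [hv]
    simp only [expAct, map_sum, map_smul]
  rw [this]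
  refine (norm_sum_le _ _).trans ?_
  rw [Finset.sum_mul, Finset.sum_mul]
  refine Finset.sum_le_sum fun i _ => ?_
  rw [norm_smul, mul_comm]
  refine mul_le_mul ?_ ?_ (norm_nonneg _) (mul_nonneg (hC i) (Real.exp_nonneg _))
  · refine (h i t ht).trans ?_
    have := hC i
    gcongr
    exact hdc i
  · exact PiLp.norm_apply_le v i

end decay

lemma var_const {n : ℕ} (A : Matrix (Fin n) (Fin n) ℝ)
    (hspec : ∀ μ ∈ spectrum ℂ (A.map Complex.ofReal), μ.re < 0)
    (y g : ℝ → EuclideanSpace ℝ (Fin n)) (hg : Continuous g)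
    (hgb : ∃ C : ℝ, ∀ t, ‖g t‖ ≤ C) (hyb : ∃ C : ℝ, ∀ t, ‖y t‖ ≤ C)
    (hy : ∀ t, HasDerivAt y (Matrix.toEuclideanLin A (y t) + g t) t) (t : ℝ) :
    IntegrableOn (fun τ => expAct A (t - τ) (g τ)) (Set.Iic t) ∧
      y t = ∫ τ in Set.Iic t, expAct A (t - τ) (g τ) := by
  obtain ⟨K, c, hK, hc, hdec⟩ := expAct_decay A hspec
  obtain ⟨G, hG⟩ := hgb
  obtain ⟨Y, hY⟩ := hyb
  set L := Matrix.toEuclideanCLM (𝕜 := ℝ) A with hL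
  have hLA : ∀ v, Matrix.toEuclideanLin A v = L v := fun v => rfl
  have hexp : ∀ τ, HasDerivAt (fun τ => NormedSpace.exp ((t - τ) • L))
      (-(NormedSpace.exp ((t - τ) • L) * L)) τ := by
    intro τ
    have h1 := hasDerivAt_exp_smul_const (𝕂 := ℝ) L (t - τ)
    have h2 : HasDerivAt (fun τ : ℝ => t - τ) (-1) τ := by
      simpa using (hasDerivAt_id τ).const_sub t
    have h3 := h1.scomp τ h2
    rw [neg_one_smul] at h3
    exact h3
  have hder : ∀ τ, HasDerivAt (fun τ => expAct A (t - τ) (y τ)) (expAct A (t - τ) (g τ)) τ := by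
    intro τ
    have := (hexp τ).clm_apply (hy τ)
    simp only [expAct_eq, ← hL]
    have e : (-(NormedSpace.exp ((t - τ) • L) * L)) (y τ) + (NormedSpace.exp ((t - τ) • L))
        ((Matrix.toEuclideanLin A) (y τ) + g τ) = NormedSpace.exp ((t - τ) • L) (g τ) := by
      rw [hLA, map_add]
      simp
    rw [← e]
    exact this
  have hcont : Continuous (fun τ => expAct A (t - τ) (g τ)) := by
    simp only [expAct_eq, ← hL]
    have : Continuous (fun τ => NormedSpace.exp ((t - τ) • L)) :=
      continuous_iff_continuousAt.mpr fun τ => (hexp τ).continuousAt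
    exact this.clm_apply hg
  have hbd : ∀ (z : ℝ → EuclideanSpace ℝ (Fin n)) (Z : ℝ), (∀ t, ‖z t‖ ≤ Z) → ∀ τ ≤ t,
      ‖expAct A (t - τ) (z τ)‖ ≤ K * Real.exp (-c * t) * Z * Real.exp (c * τ) := by
    intro z Z hZ τ hτ
    refine (hdec (t - τ) (by linarith) (z τ)).trans ?_
    calc K * Real.exp (-c * (t - τ)) * ‖z τ‖ ≤ K * Real.exp (-c * (t - τ)) * Z := by
          gcongr; exact hZ τ
      _ = _ := by
        rw [show -c * (t - τ) = -c * t + c * τ by ring, Real.exp_add]; ring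
  have hint : IntegrableOn (fun τ => expAct A (t - τ) (g τ)) (Set.Iic t) := by
    refine Integrable.mono' ((integrableOn_exp_mul_Iic hc t).const_mul
      (K * Real.exp (-c * t) * G)) hcont.aestronglyMeasurable ?_
    filter_upwards [ae_restrict_mem measurableSet_Iic] with τ hτ
    exact hbd g G hG τ hτ
  refine ⟨hint, ?_⟩
  have hlim : Filter.Tendsto (fun τ => expAct A (t - τ) (y τ)) Filter.atBot (nhds 0) := by
    have h0 : Filter.Tendsto (fun τ => K * Real.exp (-c * t) * Y * Real.exp (c * τ))
        Filter.atBot (nhds 0) := by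
      rw [← mul_zero (K * Real.exp (-c * t) * Y)]
      exact (Real.tendsto_exp_atBot.comp (Filter.tendsto_id.const_mul_atBot hc)).const_mul _
    refine squeeze_zero_norm' ?_ h0
    filter_upwards [Filter.eventually_le_atBot t] with τ hτ
    exact hbd y Y hY τ hτ
  rw [integral_Iic_of_hasDerivAt_of_tendsto' (fun τ _ => hder τ) hint hlim]
  simp [expAct]

section pd
variable {E : Type*} [NormedAddCommGroup E] [NormedSpace ℝ E]

/-- Directional derivative within the strip. -/
noncomputable def pd (a : ℝ) (w : ℝ × ℝ) (X : ℝ × ℝ → E) : ℝ × ℝ → E :=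
  fun p => fderivWithin ℝ X (Set.univ ×ˢ Set.Ico 0 a) p w

lemma strip_ud (a : ℝ) : UniqueDiffOn ℝ ((Set.univ : Set ℝ) ×ˢ Set.Ico (0 : ℝ) a) :=
  uniqueDiffOn_univ.prod (uniqueDiffOn_Ico 0 a)

lemma pd_contDiff {a : ℝ} {w : ℝ × ℝ} {X : ℝ × ℝ → E} {m k : WithTop ℕ∞}
    (hX : ContDiffOn ℝ k X (Set.univ ×ˢ Set.Ico 0 a)) (hm : m + 1 ≤ k) :
    ContDiffOn ℝ m (pd a w X) (Set.univ ×ˢ Set.Ico 0 a) :=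
  (hX.fderivWithin (strip_ud a) hm).clm_apply contDiffOn_const

lemma pd_congr {a : ℝ} {w : ℝ × ℝ} {X Y : ℝ × ℝ → E}
    (h : Set.EqOn X Y (Set.univ ×ˢ Set.Ico 0 a)) :
    Set.EqOn (pd a w X) (pd a w Y) (Set.univ ×ˢ Set.Ico 0 a) := by
  intro p hp
  simp only [pd]
  rw [fderivWithin_congr h (h hp)]

lemma pd_swap {a : ℝ} {v w : ℝ × ℝ} {X : ℝ × ℝ → E}
    (hX : ContDiffOn ℝ 2 X (Set.univ ×ˢ Set.Ico 0 a)) :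
    Set.EqOn (pd a v (pd a w X)) (pd a w (pd a v X)) (Set.univ ×ˢ Set.Ico 0 a) := by
  have key : ∀ v w : ℝ × ℝ, ∀ p ∈ (Set.univ : Set ℝ) ×ˢ Set.Ico (0 : ℝ) a, pd a v (pd a w X) p =
      fderivWithin ℝ (fderivWithin ℝ X (Set.univ ×ˢ Set.Ico 0 a)) (Set.univ ×ˢ Set.Ico 0 a) p v w := by
    intro v w p hp
    have hd : DifferentiableWithinAt ℝ (fderivWithin ℝ X (Set.univ ×ˢ Set.Ico 0 a))
        (Set.univ ×ˢ Set.Ico 0 a) p :=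
      (hX.fderivWithin (strip_ud a) (m := 1) (by norm_num)).differentiableOn (by norm_num) p hp
    have := (hd.hasFDerivWithinAt.clm_apply (hasFDerivWithinAt_const w p _)).fderivWithin
      (strip_ud a p hp)
    change fderivWithin ℝ (fun y => (fderivWithin ℝ X (Set.univ ×ˢ Set.Ico 0 a) y) w)
      (Set.univ ×ˢ Set.Ico 0 a) p v = _
    rw [this]
    simp
  intro p hp
  rw [key v w p hp, key w v p hp]
  have hsym : IsSymmSndFDerivWithinAt ℝ X (Set.univ ×ˢ Set.Ico 0 a) p := by
    refine (hX p hp).isSymmSndFDerivWithinAt (by simp) (strip_ud a) ?_ hp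
    have h0 : (0 : ℝ) < a := lt_of_le_of_lt hp.2.1 hp.2.2
    rw [interior_prod_eq, interior_univ, interior_Ico, closure_prod_eq, closure_univ,
      closure_Ioo h0.ne]
    exact ⟨trivial, hp.2.1, hp.2.2.le⟩
  exact hsym v w

lemma pd_eps {a : ℝ} {X : ℝ × ℝ → E}
    (hX : ContDiffOn ℝ 1 X (Set.univ ×ˢ Set.Ico 0 a)) (t e : ℝ) (he : e ∈ Set.Ico 0 a) :
    HasDerivWithinAt (fun e => X (t, e)) (pd a (0, 1) X (t, e)) (Set.Ico 0 a) e := by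
  have hd := (hX.differentiableOn (by norm_num) (t, e) ⟨trivial, he⟩).hasFDerivWithinAt
  have hl : HasDerivWithinAt (fun e : ℝ => (t, e)) ((0 : ℝ), (1 : ℝ)) (Set.Ico 0 a) e :=
    (hasDerivWithinAt_const e _ t).prodMk (hasDerivWithinAt_id e _)
  exact hd.comp_hasDerivWithinAt e hl (fun e he => ⟨trivial, he⟩)

lemma pd_t {a : ℝ} {X : ℝ × ℝ → E}
    (hX : ContDiffOn ℝ 1 X (Set.univ ×ˢ Set.Ico 0 a)) (t e : ℝ) (he : e ∈ Set.Ico 0 a) :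
    HasDerivAt (fun s => X (s, e)) (pd a (1, 0) X (t, e)) t := by
  have hd := (hX.differentiableOn (by norm_num) (t, e) ⟨trivial, he⟩).hasFDerivWithinAt
  have hl : HasDerivWithinAt (fun s : ℝ => (s, e)) ((1 : ℝ), (0 : ℝ)) Set.univ t :=
    (hasDerivWithinAt_id t _).prodMk (hasDerivWithinAt_const t _ e)
  have hm : Set.MapsTo (fun s : ℝ => (s, e)) Set.univ (Set.univ ×ˢ Set.Ico 0 a) :=
    fun s _ => ⟨trivial, he⟩
  have := hd.comp_hasDerivWithinAt t hl hm
  exact hasDerivWithinAt_univ.mp this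

end pd

lemma hasDerivWithinAt_id_smul {E : Type*} [NormedAddCommGroup E] [NormedSpace ℝ E]
    (φ : ℝ → E) (s : Set ℝ) (h : ContinuousWithinAt φ s 0) :
    HasDerivWithinAt (fun e => e • φ e) (φ 0) s 0 := by
  rw [hasDerivWithinAt_iff_tendsto_slope]
  have h' : Filter.Tendsto φ (nhdsWithin 0 (s \ {0})) (nhds (φ 0)) :=
    h.mono_left (nhdsWithin_mono _ Set.sdiff_subset)
  refine h'.congr' ?_
  filter_upwards [self_mem_nhdsWithin] with e he
  have : e ≠ 0 := he.2
  simp [slope, this]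

section main
variable {E : Type*} [NormedAddCommGroup E] [NormedSpace ℝ E]

lemma variational (L : E →L[ℝ] E)
    (f₀ : E → E)
    (hf₀ : ContDiff ℝ 2 f₀) (hDf₀0 : fderiv ℝ f₀ 0 = 0)
    (f₁ : E → ℝ → E)
    (hf₁x : ∀ t : ℝ, ContDiff ℝ 1 fun y => f₁ y t)
    (ε₀ : ℝ) (hε₀ : 0 < ε₀)
    (x : ℝ → ℝ → E)
    (hxC3 : ContDiffOn ℝ 3 (fun p : ℝ × ℝ => x p.1 p.2) (Set.univ ×ˢ Set.Ico 0 ε₀))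
    (hsol : ∀ ε ∈ Set.Ico (0 : ℝ) ε₀, ∀ t : ℝ, HasDerivAt (fun s => x s ε)
      (L (x t ε) + f₀ (x t ε) + ε • f₁ (x t ε) t) t)
    (hx0 : ∀ t : ℝ, x t 0 = 0) (ξ₁ ξ₂ : ℝ → E)
    (hξ₁ : ∀ t, ξ₁ t = derivWithin (fun ε => x t ε) (Set.Ico 0 ε₀) 0)
    (hξ₂ : ∀ t, ξ₂ t = (1 / 2 : ℝ) • iteratedDerivWithin 2 (fun ε => x t ε) (Set.Ico 0 ε₀) 0) :
    (∀ t, HasDerivAt ξ₁ (L (ξ₁ t) + f₁ 0 t) t) ∧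
    (∀ t, HasDerivAt ξ₂ (L (ξ₂ t) + ((1 / 2 : ℝ) • (fderiv ℝ (fderiv ℝ f₀) 0 (ξ₁ t) (ξ₁ t)) +
        fderiv ℝ (fun y => f₁ y t) 0 (ξ₁ t))) t) ∧
    Continuous (fun t => (1 / 2 : ℝ) • (fderiv ℝ (fderiv ℝ f₀) 0 (ξ₁ t) (ξ₁ t)) +
        fderiv ℝ (fun y => f₁ y t) 0 (ξ₁ t)) := by
  set X : ℝ × ℝ → E := fun p => x p.1 p.2 with hXdef
  set I := Set.Ico (0 : ℝ) ε₀ with hI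
  have h0I : (0 : ℝ) ∈ I := ⟨le_rfl, hε₀⟩
  have hud : UniqueDiffOn ℝ I := uniqueDiffOn_Ico 0 ε₀
  have hX1 : ContDiffOn ℝ 1 X (Set.univ ×ˢ I) := hxC3.of_le (by norm_num)
  have hX2 : ContDiffOn ℝ 2 X (Set.univ ×ˢ I) := hxC3.of_le (by norm_num)
  set U := pd ε₀ (0, 1) X with hU
  set V := pd ε₀ (0, 1) U with hV
  set T := pd ε₀ (1, 0) X with hT
  have hU2 : ContDiffOn ℝ 2 U (Set.univ ×ˢ I) := pd_contDiff hxC3 (by norm_num)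
  have hU1 : ContDiffOn ℝ 1 U (Set.univ ×ˢ I) := hU2.of_le (by norm_num)
  have hT2 : ContDiffOn ℝ 2 T (Set.univ ×ˢ I) := pd_contDiff hxC3 (by norm_num)
  have hT1 : ContDiffOn ℝ 1 T (Set.univ ×ˢ I) := hT2.of_le (by norm_num)
  have hV1 : ContDiffOn ℝ 1 V (Set.univ ×ˢ I) := pd_contDiff hU2 (by norm_num)
  have hTU1 : ContDiffOn ℝ 1 (pd ε₀ (0, 1) T) (Set.univ ×ˢ I) := pd_contDiff hT2 (by norm_num)
  have dX : ∀ t, ∀ e ∈ I, HasDerivWithinAt (fun e => x t e) (U (t, e)) I e :=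
    fun t e he => pd_eps hX1 t e he
  have dU : ∀ t, ∀ e ∈ I, HasDerivWithinAt (fun e => U (t, e)) (V (t, e)) I e :=
    fun t e he => pd_eps hU1 t e he
  have eξ₁ : ∀ t, ξ₁ t = U (t, 0) := fun t => by
    rw [hξ₁]; exact (dX t 0 h0I).derivWithin (hud 0 h0I)
  have eξ₂ : ∀ t, ξ₂ t = (1 / 2 : ℝ) • V (t, 0) := fun t => by
    rw [hξ₂, iteratedDerivWithin_succ, iteratedDerivWithin_one]
    congr 1
    rw [derivWithin_congr (f := fun e => U (t, e))
      (fun e he => (dX t e he).derivWithin (hud e he)) ((dX t 0 h0I).derivWithin (hud 0 h0I))]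
    exact (dU t 0 h0I).derivWithin (hud 0 h0I)
  have eT : ∀ t, ∀ e ∈ I, T (t, e) = L (x t e) + f₀ (x t e) + e • f₁ (x t e) t :=
    fun t e he => (pd_t hX1 t e he).unique (hsol e he t)
  -- first epsilon-derivative of the vector field along the solution
  have hf₀d : ∀ y, HasFDerivAt f₀ (fderiv ℝ f₀ y) y := fun y =>
    (hf₀.differentiable (by norm_num) y).hasFDerivAt
  have hf₁d : ∀ t y, HasFDerivAt (fun y => f₁ y t) (fderiv ℝ (fun y => f₁ y t) y) y := fun t y =>
    ((hf₁x t).differentiable (by norm_num) y).hasFDerivAt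
  have eTU : ∀ t, ∀ e ∈ I, pd ε₀ (0, 1) T (t, e) =
      L (U (t, e)) + fderiv ℝ f₀ (x t e) (U (t, e)) +
      (e • fderiv ℝ (fun y => f₁ y t) (x t e) (U (t, e)) + f₁ (x t e) t) := by
    intro t e he
    have h1 : HasDerivWithinAt (fun e => T (t, e)) (pd ε₀ (0, 1) T (t, e)) I e :=
      pd_eps hT1 t e he
    have hx := dX t e he
    have h2 := ((L.hasFDerivAt.comp_hasDerivWithinAt e hx).add
      ((hf₀d (x t e)).comp_hasDerivWithinAt e hx)).add
      ((hasDerivWithinAt_id e I).smul ((hf₁d t (x t e)).comp_hasDerivWithinAt e hx))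
    have h3 : HasDerivWithinAt (fun e => T (t, e)) _ I e :=
      h2.congr (fun e he => eT t e he) (eT t e he)
    have := (hud e he).eq_deriv _ h1 h3
    rw [this]
    simp
  have eTV : ∀ t, pd ε₀ (0, 1) (pd ε₀ (0, 1) T) (t, 0) =
      L (V (t, 0)) + fderiv ℝ (fderiv ℝ f₀) 0 (U (t, 0)) (U (t, 0)) +
      (2 : ℝ) • fderiv ℝ (fun y => f₁ y t) 0 (U (t, 0)) := by
    intro t
    have h1 : HasDerivWithinAt (fun e => pd ε₀ (0, 1) T (t, e))
      (pd ε₀ (0, 1) (pd ε₀ (0, 1) T) (t, 0)) I 0 := pd_eps hTU1 t 0 h0I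
    have hx := dX t 0 h0I
    have hu := dU t 0 h0I
    have hdd : HasFDerivAt (fderiv ℝ f₀) (fderiv ℝ (fderiv ℝ f₀) (x t 0)) (x t 0) :=
      ((hf₀.fderiv_right (m := 1) (by norm_num)).differentiable (by norm_num) _).hasFDerivAt
    have hc : ContinuousWithinAt (fun e => fderiv ℝ (fun y => f₁ y t) (x t e) (U (t, e))) I 0 :=
      (((hf₁x t).continuous_fderiv (by norm_num)).continuousAt.comp_continuousWithinAt
        hx.continuousWithinAt).clm_apply hu.continuousWithinAt
    have h2 := ((L.hasFDerivAt.comp_hasDerivWithinAt 0 hu).add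
      ((hdd.comp_hasDerivWithinAt 0 hx).clm_apply hu)).add
      ((hasDerivWithinAt_id_smul _ I hc).add ((hf₁d t (x t 0)).comp_hasDerivWithinAt 0 hx))
    have h3 : HasDerivWithinAt (fun e => pd ε₀ (0, 1) T (t, e)) _ I 0 :=
      h2.congr (fun e he => eTU t e he) (eTU t 0 h0I)
    have := (hud 0 h0I).eq_deriv _ h1 h3
    rw [this]
    simp [hx0, hDf₀0, two_smul]
  have dξ₁ : ∀ t, HasDerivAt ξ₁ (L (ξ₁ t) + f₁ 0 t) t := by
    intro t
    have h := pd_t hU1 t 0 h0I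
    have e : pd ε₀ (1, 0) U (t, 0) = pd ε₀ (0, 1) T (t, 0) := pd_swap hX2 ⟨trivial, h0I⟩
    rw [e, eTU t 0 h0I] at h
    rw [show ξ₁ = fun s => U (s, 0) from funext eξ₁]
    simpa [hx0, hDf₀0] using h
  have eW : ∀ t, pd ε₀ (1, 0) V (t, 0) = pd ε₀ (0, 1) (pd ε₀ (0, 1) T) (t, 0) := by
    intro t
    have e1 : pd ε₀ (1, 0) V (t, 0) = pd ε₀ (0, 1) (pd ε₀ (1, 0) U) (t, 0) :=
      pd_swap hU2 ⟨trivial, h0I⟩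
    rw [e1]
    exact pd_congr (pd_swap hX2) ⟨trivial, h0I⟩
  have eG : ∀ t, (1 / 2 : ℝ) • pd ε₀ (1, 0) V (t, 0) =
      L (ξ₂ t) + ((1 / 2 : ℝ) • (fderiv ℝ (fderiv ℝ f₀) 0 (ξ₁ t) (ξ₁ t)) +
        fderiv ℝ (fun y => f₁ y t) 0 (ξ₁ t)) := by
    intro t
    rw [eW, eTV, eξ₂, eξ₁, map_smul]
    module
  have dξ₂ : ∀ t, HasDerivAt ξ₂ ((1 / 2 : ℝ) • pd ε₀ (1, 0) V (t, 0)) t := by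
    intro t
    rw [show ξ₂ = fun s => (1 / 2 : ℝ) • V (s, 0) from funext eξ₂]
    exact (pd_t hV1 t 0 h0I).const_smul (1 / 2 : ℝ)
  refine ⟨dξ₁, fun t => eG t ▸ dξ₂ t, ?_⟩
  have hcW : Continuous (fun t => pd ε₀ (1, 0) V (t, (0 : ℝ))) := by
    have h : ContDiffOn ℝ 0 (pd ε₀ (1, 0) V) (Set.univ ×ˢ I) := pd_contDiff hV1 (by norm_num)
    exact h.continuousOn.comp_continuous (by fun_prop) (fun t => ⟨trivial, h0I⟩)
  have hcξ₂ : Continuous ξ₂ := continuous_iff_continuousAt.mpr fun t => (dξ₂ t).continuousAt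
  have : (fun t => (1 / 2 : ℝ) • (fderiv ℝ (fderiv ℝ f₀) 0 (ξ₁ t) (ξ₁ t)) +
        fderiv ℝ (fun y => f₁ y t) 0 (ξ₁ t)) =
      fun t => (1 / 2 : ℝ) • pd ε₀ (1, 0) V (t, 0) - L (ξ₂ t) := by
    funext t; rw [eG]; abel
  rw [this]
  exact (hcW.const_smul _).sub (L.continuous.comp hcξ₂)

end main

/-- second-order coefficient of the anchor trajectory.  Under the hypotheses
of Statement 6, assume additionally that `f₀` is `C²`, `f̃₁` is `C¹` in `x` with
`sup_t ‖D_x f̃₁(0,t)‖ < ∞`, `x` is `C³`, and `ξ₂(t) := (1/2) ∂²_ε x(t,ε)|_{ε=0}` is bounded.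
Then `ξ₂(t) = ∫_{-∞}^{t} e^{A(t−τ)} [ (1/2) D²f₀(0)(ξ₁(τ),ξ₁(τ)) + D_x f̃₁(0,τ) ξ₁(τ) ] dτ`,
where `ξ₁(t) = ∂_ε x(t,ε)|_{ε=0} = ∫_{-∞}^{t} e^{A(t−τ)} f̃₁(0,τ) dτ`. -/
theorem stmt_7 {n : ℕ} (A : Matrix (Fin n) (Fin n) ℝ)
    (hspec : ∀ μ ∈ spectrum ℂ (A.map Complex.ofReal), μ.re < 0)
    (f₀ : EuclideanSpace ℝ (Fin n) → EuclideanSpace ℝ (Fin n))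
    (hf₀ : ContDiff ℝ 2 f₀) (hf₀0 : f₀ 0 = 0) (hDf₀0 : fderiv ℝ f₀ 0 = 0)
    (f₁ : EuclideanSpace ℝ (Fin n) → ℝ → EuclideanSpace ℝ (Fin n))
    (hf₁c : Continuous fun p : EuclideanSpace ℝ (Fin n) × ℝ => f₁ p.1 p.2)
    (hf₁x : ∀ t : ℝ, ContDiff ℝ 1 fun y => f₁ y t)
    (hf₁b : ∃ C : ℝ, ∀ t : ℝ, ‖f₁ 0 t‖ ≤ C)
    (hDf₁b : ∃ C : ℝ, ∀ t : ℝ, ‖fderiv ℝ (fun y => f₁ y t) 0‖ ≤ C)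
    (ε₀ : ℝ) (hε₀ : 0 < ε₀)
    (x : ℝ → ℝ → EuclideanSpace ℝ (Fin n))
    (hxC3 : ContDiffOn ℝ 3 (fun p : ℝ × ℝ => x p.1 p.2) (Set.univ ×ˢ Set.Ico 0 ε₀))
    (hsol : ∀ ε ∈ Set.Ico (0 : ℝ) ε₀, ∀ t : ℝ, HasDerivAt (fun s => x s ε)
      (Matrix.toEuclideanLin A (x t ε) + f₀ (x t ε) + ε • f₁ (x t ε) t) t)
    (hx0 : ∀ t : ℝ, x t 0 = 0)
    (hξ₁bdd : ∃ C : ℝ, ∀ t : ℝ,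
      ‖derivWithin (fun ε => x t ε) (Set.Ico 0 ε₀) 0‖ ≤ C)
    (hξ₂bdd : ∃ C : ℝ, ∀ t : ℝ,
      ‖(1 / 2 : ℝ) • iteratedDerivWithin 2 (fun ε => x t ε) (Set.Ico 0 ε₀) 0‖ ≤ C) :
    (∀ t : ℝ, IntegrableOn (fun τ => expAct A (t - τ)
      ((1 / 2 : ℝ) • (fderiv ℝ (fderiv ℝ f₀) 0
          (derivWithin (fun ε => x τ ε) (Set.Ico 0 ε₀) 0)
          (derivWithin (fun ε => x τ ε) (Set.Ico 0 ε₀) 0)) +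
        fderiv ℝ (fun y => f₁ y τ) 0
          (derivWithin (fun ε => x τ ε) (Set.Ico 0 ε₀) 0))) (Set.Iic t)) ∧
    (∀ t : ℝ, derivWithin (fun ε => x t ε) (Set.Ico 0 ε₀) 0
      = ∫ τ in Set.Iic t, expAct A (t - τ) (f₁ 0 τ)) ∧
    (∀ t : ℝ, (1 / 2 : ℝ) • iteratedDerivWithin 2 (fun ε => x t ε) (Set.Ico 0 ε₀) 0
      = ∫ τ in Set.Iic t, expAct A (t - τ)
        ((1 / 2 : ℝ) • (fderiv ℝ (fderiv ℝ f₀) 0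
            (derivWithin (fun ε => x τ ε) (Set.Ico 0 ε₀) 0)
            (derivWithin (fun ε => x τ ε) (Set.Ico 0 ε₀) 0)) +
          fderiv ℝ (fun y => f₁ y τ) 0
            (derivWithin (fun ε => x τ ε) (Set.Ico 0 ε₀) 0))) := by
  obtain ⟨h1, h2, h3⟩ := variational (Matrix.toEuclideanCLM (𝕜 := ℝ) A) f₀ hf₀ hDf₀0 f₁ hf₁x ε₀ hε₀ x
    hxC3 hsol hx0 _ _ (fun _ => rfl) (fun _ => rfl)
  have hc1 : Continuous (fun t => f₁ 0 t) := hf₁c.comp (by fun_prop : Continuous fun t : ℝ => ((0 : EuclideanSpace ℝ (Fin n)), t))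
  have r1 := var_const A hspec _ _ hc1 hf₁b hξ₁bdd h1
  have hgb : ∃ C : ℝ, ∀ τ : ℝ, ‖(1 / 2 : ℝ) • (fderiv ℝ (fderiv ℝ f₀) 0
          (derivWithin (fun ε => x τ ε) (Set.Ico 0 ε₀) 0)
          (derivWithin (fun ε => x τ ε) (Set.Ico 0 ε₀) 0)) +
        fderiv ℝ (fun y => f₁ y τ) 0
          (derivWithin (fun ε => x τ ε) (Set.Ico 0 ε₀) 0)‖ ≤ C := by
    obtain ⟨C, hC⟩ := hξ₁bdd
    obtain ⟨D, hD⟩ := hDf₁b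
    refine ⟨‖(1 / 2 : ℝ)‖ * (‖fderiv ℝ (fderiv ℝ f₀) 0‖ * C * C) + D * C, fun τ => ?_⟩
    have hC0 : 0 ≤ C := (norm_nonneg _).trans (hC 0)
    have hD0 : 0 ≤ D := (norm_nonneg _).trans (hD 0)
    refine (norm_add_le _ _).trans (add_le_add ?_ ?_)
    · rw [norm_smul]
      gcongr
      refine (ContinuousLinearMap.le_opNorm₂ _ _ _).trans ?_
      gcongr
      · exact hC τ
      · exact hC τ
    · refine (ContinuousLinearMap.le_opNorm _ _).trans ?_
      gcongr
      · exact hD τ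
      · exact hC τ
  have r2 := var_const A hspec _ _ h3 hgb hξ₂bdd h2
  exact ⟨fun t => (r2 t).1, fun t => (r1 t).2, fun t => (r2 t).2⟩
end
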